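/- Let ℓ ≥ 2, m ≥ 3, s ≥ 2ℓ and 2 ≤ r ≤ s − ℓ be integers, and let G = C_m^{(s,ℓ)} be the ℓ-loose s-uniform cycle with m edges. Then: (i) if r ≤ s − 2ℓ, then τ^{(r)}_{P_G} = 0; (ii) if r ≥ s − 2ℓ + 1, then τ^{(r)}_{P_G} ≥ (r − s + 2ℓ)/3; (iii) if r = s − 2ℓ + 2, then τ^{(r)}_{P_G} = 2/3. -/

import Mathlib

open Filter
open scoped ENNReal

namespace SemiRandomHypergraph

/-- The collection of `k`-element subsets of `Fin n`. -/
abbrev Col (n k : ℕ) := {A : Finset (Fin n) // A.card = k}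

lemma col_nonempty {n k : ℕ} (h : k ≤ n) : Nonempty (Col n k) := by
  obtain ⟨t, -, ht⟩ :=
    Finset.exists_subset_card_eq (show k ≤ (Finset.univ : Finset (Fin n)).card by simpa using h)
  exact ⟨⟨t, ht⟩⟩

/-- One round of the semi-random `(r,s)`-hypergraph process: the random `r`-set `U_t`
together with the player's reply, an `(s-r)`-set `V_t` (which may overlap `U_t`). -/
abbrev Step (n r s : ℕ) := Col n r × Col n (s - r)

/-- A strategy of the player: given the history so far (most recent round first) and the
current random `r`-set `U_t`, a probability distribution for the reply `V_t`. -/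
def Strategy (n r s : ℕ) := List (Step n r s) → Col n r → PMF (Col n (s - r))

/-- The distribution of the history (most recent round first) after `t` rounds of the
semi-random hypergraph process played with strategy `S`. -/
noncomputable def historyPMF {n r s : ℕ} (h : Nonempty (Col n r)) (S : Strategy n r s) :
    ℕ → PMF (List (Step n r s))
  | 0 => PMF.pure []
  | t + 1 =>
      (historyPMF h S t).bind fun hist =>
        (@PMF.uniformOfFintype (Col n r) _ h).bind fun U =>
          (S hist U).map fun W => (U, W) :: hist

/-- The multi-hypergraph `H_t^{(r,s)}` (recorded by its history `hist`; the edge created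
in a round is the multiset `U_t + V_t`) contains a sub-hypergraph isomorphic to the
hypergraph with edge set `E`. -/
def ContainsCopy {V : Type*} {n r s : ℕ} (E : Finset (Finset V))
    (hist : List (Step n r s)) : Prop :=
  ∃ φ : V ↪ Fin n, ∀ e ∈ E, ∃ p ∈ hist,
    Multiset.map (φ : V → Fin n) e.val = p.1.1.val + p.2.1.val

/-- The probability that after `t` rounds the multi-hypergraph `H_t^{(r,s)}` built with
strategy `S` contains a copy of the hypergraph with edge set `E`. -/
noncomputable def probContains {V : Type*} (n r s : ℕ) (E : Finset (Finset V))
    (S : Strategy n r s) (t : ℕ) : ℝ≥0∞ :=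
  if h : r ≤ n then
    (historyPMF (col_nonempty h) S t).toOuterMeasure {hist | ContainsCopy E hist}
  else 0

/-- `τ^{(r)}_{P_G}(q, n)`: the least number of rounds needed so that some strategy makes
the probability of containing a copy of `G` at least `q` (`⊤` if impossible). -/
noncomputable def tauQ {V : Type*} (r s : ℕ) (E : Finset (Finset V)) (q : ℝ≥0∞)
    (n : ℕ) : ℕ∞ :=
  ⨅ S : Strategy n r s,
    sInf {c : ℕ∞ | ∃ t : ℕ, c = (t : ℕ∞) ∧ q ≤ probContains n r s E S t}

/-- Logarithm on `ℕ∞`, with `log ⊤ = ⊤`, valued in `EReal`. -/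
noncomputable def elog (m : ℕ∞) : EReal :=
  WithTop.recTopCoe ⊤ (fun t : ℕ => ((Real.log t : ℝ) : EReal)) m

/-- `τ^{(r)}_{P_G} = lim_{q→1⁻} limsup_{n→∞} ln(τ^{(r)}_{P_G}(q,n)) / ln n`; since
`q ↦ limsup_n …` is non-decreasing, the limit as `q → 1⁻` equals the supremum over
`q ∈ (0,1)`. -/
noncomputable def tauExp {V : Type*} (r s : ℕ) (E : Finset (Finset V)) : EReal :=
  ⨆ q ∈ Set.Ioo (0 : ℝ≥0∞) 1,
    Filter.limsup
      (fun n : ℕ => elog (tauQ r s E q n) * (((Real.log n)⁻¹ : ℝ) : EReal)) atTop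

/-- The hypergraph with edge set `E` is `d`-degenerate: every (induced, hence every)
sub-hypergraph has a vertex of degree at most `d`. -/
def Degen {V : Type*} [DecidableEq V] (E : Finset (Finset V)) (d : ℕ) : Prop :=
  ∀ S : Finset V, S.Nonempty → ∃ v ∈ S, (E.filter fun e => v ∈ e ∧ e ⊆ S).card ≤ d

/-- The hypergraph with edge set `E` has degeneracy exactly `d`. -/
def DegeneracyEq {V : Type*} [DecidableEq V] (E : Finset (Finset V)) (d : ℕ) : Prop :=
  Degen E d ∧ ∀ d' : ℕ, Degen E d' → d ≤ d'

end SemiRandomHypergraph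

namespace SemiRandomHypergraph

/-- The `ℓ`-loose `s`-uniform cycle `C_m^{(s,ℓ)}` with `m` edges: on the `(s-ℓ)m`
cyclically ordered vertices, the `j`-th edge consists of the `s` consecutive vertices
starting at position `j(s-ℓ)`, so that consecutive edges overlap in exactly `ℓ`
vertices. -/
def looseCycle (s ℓ m : ℕ) : Finset (Finset (ZMod ((s - ℓ) * m))) :=
  (Finset.range m).image fun j =>
    (Finset.range s).image fun i => ((j * (s - ℓ) + i : ℕ) : ZMod ((s - ℓ) * m))

end SemiRandomHypergraph

/-!
Lower bound: every edge of the cycle meets the union of its two neighbours in `2ℓ` vertices. So the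
latest edge of a copy that appears within `t` rounds has at least `r + 2ℓ - s` of its random
vertices in the union of two earlier edges. For fixed rounds of these three edges this has
probability `O(n ^ (-(r + 2ℓ - s)))`, so by the union bound over the rounds a copy is unlikely
unless `t ^ 3` is of order `n ^ (r + 2ℓ - s)`.

Upper bounds: a random `r`-set avoids a given small set of vertices with high probability, hence a
loose path can be extended edge by edge. If `r + 2ℓ ≤ s`, the player's `s - r` vertices contain both
overlaps of the closing edge, so the path closes up in a bounded number of rounds. If
`r + 2ℓ = s + 2`, the player first pads the two ends of a path on `m - 3` edges to kernels of size
`s - r` and grows about `n ^ (2 / 3)` edges through each kernel, the fans. After `O(n ^ (2 / 3))`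
further rounds some random set meets both fans in one vertex each, and the player's reply turns it
into an edge overlapping one edge of each fan in exactly `ℓ` vertices.
-/

namespace SemiRandomHypergraph

open Finset

variable {n r s : ℕ}

lemma descFactorial_mul_pow_le (h : r ≤ n) (a : ℕ) :
    r.descFactorial a * n ^ a ≤ n.descFactorial a * r ^ a := by
  induction a with
  | zero => simp
  | succ a ih =>
    have hstep : (r - a) * n ≤ (n - a) * r := by
      rw [Nat.sub_mul, Nat.sub_mul, mul_comm r n]
      exact Nat.sub_le_sub_left (Nat.mul_le_mul_left a h) _
    calc r.descFactorial (a + 1) * n ^ (a + 1)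
        = (r.descFactorial a * n ^ a) * ((r - a) * n) := by
          rw [Nat.descFactorial_succ, pow_succ]; ring
      _ ≤ (n.descFactorial a * r ^ a) * ((n - a) * r) := Nat.mul_le_mul ih hstep
      _ = n.descFactorial (a + 1) * r ^ (a + 1) := by
          rw [Nat.descFactorial_succ, pow_succ]; ring

lemma choose_sub_mul_pow_le {a : ℕ} (ha : a ≤ r) (h : r ≤ n) :
    (n - a).choose (r - a) * n ^ a ≤ r ^ a * n.choose r := by
  have hchoose : 0 < a.factorial * n.choose a :=
    Nat.mul_pos a.factorial_pos (Nat.choose_pos (ha.trans h))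
  refine Nat.le_of_mul_le_mul_left ?_ hchoose
  calc a.factorial * n.choose a * ((n - a).choose (r - a) * n ^ a)
      = a.factorial * n ^ a * (n.choose r * r.choose a) := by
        rw [Nat.choose_mul ha]; ring
    _ = n.choose r * (r.descFactorial a * n ^ a) := by
        rw [r.descFactorial_eq_factorial_mul_choose]; ring
    _ ≤ n.choose r * (n.descFactorial a * r ^ a) :=
        Nat.mul_le_mul_left _ (descFactorial_mul_pow_le h a)
    _ = a.factorial * n.choose a * (r ^ a * n.choose r) := by
        rw [n.descFactorial_eq_factorial_mul_choose]; ring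

lemma choose_le_card_supersets (A : Finset (Fin n)) :
    #{U : Col n r | A ⊆ U.1} ≤ (n - #A).choose (r - #A) := by
  have hcard : #(powersetCard (r - #A) Aᶜ) = (n - #A).choose (r - #A) := by
    rw [card_powersetCard, card_compl, Fintype.card_fin]
  rw [← hcard]
  refine card_le_card_of_injOn (fun U => U.1 \ A) (fun U hU => ?_) fun U hU U' hU' h => ?_
  · rw [mem_coe, mem_filter_univ] at hU
    rw [mem_coe, mem_powersetCard, card_sdiff_of_subset hU, U.2]
    exact ⟨fun x hx => mem_compl.2 (mem_sdiff.1 hx).2, rfl⟩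
  · rw [mem_coe, mem_filter_univ] at hU hU'
    rw [Subtype.ext_iff, ← sdiff_union_of_subset hU, ← sdiff_union_of_subset hU']
    exact congrArg (· ∪ A) h

lemma pair_union_inter_eq {α : Type*} [DecidableEq α] {X₁ X₂ Z R : Finset α} {x₁ x₂ : α}
    (h₁ : X₁ ⊆ Z) (h₂ : X₂ ⊆ Z) (h : Disjoint X₁ X₂) (hx₁ : x₁ ∈ X₁) (hx₂ : x₂ ∈ X₂)
    (hR : Disjoint R Z) :
    ({x₁, x₂} ∪ R) ∩ X₁ = {x₁} ∧ ({x₁, x₂} ∪ R) ∩ X₂ = {x₂} ∧ ({x₁, x₂} ∪ R) \ Z = R := by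
  rw [disjoint_left] at h hR
  refine ⟨?_, ?_, ?_⟩ <;> ext a <;>
    simp only [mem_inter, Finset.mem_sdiff, mem_union, mem_insert, mem_singleton] <;> grind

lemma card_double_hit_ge (hr : 2 ≤ r) {X₁ X₂ Z : Finset (Fin n)} (h₁ : X₁ ⊆ Z) (h₂ : X₂ ⊆ Z)
    (h : Disjoint X₁ X₂) :
    #X₁ * #X₂ * (n - #Z).choose (r - 2) ≤
      #{U : Col n r | ∃ x₁ ∈ X₁, ∃ x₂ ∈ X₂, U.1 ∩ Z = {x₁, x₂}} := by
  have hcard : #(X₁ ×ˢ X₂ ×ˢ powersetCard (r - 2) Zᶜ) =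
      #X₁ * #X₂ * (n - #Z).choose (r - 2) := by
    simp only [card_product, card_powersetCard, card_compl, Fintype.card_fin, mul_assoc]
  rw [← hcard, ← card_map (Function.Embedding.subtype _)]
  have hdata : ∀ q ∈ X₁ ×ˢ X₂ ×ˢ powersetCard (r - 2) Zᶜ,
      q.1 ∈ X₁ ∧ q.2.1 ∈ X₂ ∧ Disjoint q.2.2 Z ∧ #q.2.2 = r - 2 := by
    intro q hq
    simp only [mem_product, mem_powersetCard, subset_compl_iff_disjoint_right] at hq
    tauto
  refine card_le_card_of_injOn (fun q => {q.1, q.2.1} ∪ q.2.2) ?_ ?_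
  · rintro ⟨x₁, x₂, R⟩ hq
    obtain ⟨hx₁, hx₂, hR, hRcard⟩ := hdata _ hq
    have hpair : ({x₁, x₂} : Finset (Fin n)) ⊆ Z := by grind
    have hne : x₁ ≠ x₂ := by grind [disjoint_left]
    have hcard : #({x₁, x₂} ∪ R) = r := by
      rw [card_union_of_disjoint (hR.symm.mono_left hpair), card_pair hne, hRcard]
      omega
    simp only [coe_map, Set.mem_image, mem_coe, mem_filter_univ]
    refine ⟨⟨_, hcard⟩, ⟨x₁, hx₁, x₂, hx₂, ?_⟩, rfl⟩
    rw [union_inter_distrib_right, disjoint_iff_inter_eq_empty.1 hR, union_empty,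
      inter_eq_left.2 hpair]
  · rintro ⟨x₁, x₂, R⟩ hq ⟨y₁, y₂, R'⟩ hq' heq
    obtain ⟨hx₁, hx₂, hR, -⟩ := hdata _ hq
    obtain ⟨hy₁, hy₂, hR', -⟩ := hdata _ hq'
    obtain ⟨e₁, e₂, e₃⟩ := pair_union_inter_eq h₁ h₂ h hx₁ hx₂ hR
    obtain ⟨f₁, f₂, f₃⟩ := pair_union_inter_eq h₁ h₂ h hy₁ hy₂ hR'
    dsimp only at heq e₁ e₂ e₃ f₁ f₂ f₃
    rw [heq] at e₁ e₂ e₃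
    rw [singleton_injective (e₁.symm.trans f₁), singleton_injective (e₂.symm.trans f₂),
      e₃.symm.trans f₃]

lemma mul_choose_le_of_two_mul_le {z : ℕ} (hr : 2 ≤ r) (hz : 2 * (z + r) ≤ n) :
    n.choose r ≤ 2 ^ (r - 2) * n ^ 2 * (n - z).choose (r - 2) := by
  have hpow : n ^ (r - 2) ≤ 2 ^ (r - 2) * ((r - 2).factorial * (n - z).choose (r - 2)) :=
    calc n ^ (r - 2) ≤ (2 * (n - z + 1 - (r - 2))) ^ (r - 2) := Nat.pow_le_pow_left (by omega) _
      _ = 2 ^ (r - 2) * (n - z + 1 - (r - 2)) ^ (r - 2) := mul_pow _ _ _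
      _ ≤ _ := by
        rw [← Nat.descFactorial_eq_factorial_mul_choose]
        exact Nat.mul_le_mul_left _ (Nat.pow_sub_le_descFactorial _ _)
  refine Nat.le_of_mul_le_mul_left ?_ r.factorial_pos
  calc r.factorial * n.choose r ≤ n ^ r := by
        rw [← Nat.descFactorial_eq_factorial_mul_choose]; exact Nat.descFactorial_le_pow _ _
    _ = n ^ 2 * n ^ (r - 2) := by rw [← pow_add, Nat.add_sub_cancel' hr]
    _ ≤ n ^ 2 * (2 ^ (r - 2) * (r.factorial * (n - z).choose (r - 2))) := by
        refine Nat.mul_le_mul_left _ (hpow.trans ?_)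
        gcongr
        omega
    _ = r.factorial * (2 ^ (r - 2) * n ^ 2 * (n - z).choose (r - 2)) := by ring

lemma toOuterMeasure_compl {α : Type*} (p : PMF α) (A : Set α) :
    p.toOuterMeasure Aᶜ = 1 - p.toOuterMeasure A := by
  let _ : MeasurableSpace α := ⊤
  simpa only [PMF.toMeasure_apply_eq_toOuterMeasure] using
    MeasureTheory.prob_compl_eq_one_sub (μ := p.toMeasure) (MeasurableSet.of_discrete (s := A))

section RandomSet

variable [Nonempty (Col n r)]

/-- The law of the random `r`-set of a round. -/
noncomputable abbrev uniformCol (n r : ℕ) [Nonempty (Col n r)] : PMF (Col n r) :=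
  PMF.uniformOfFintype (Col n r)

lemma le_of_nonempty_col (n r : ℕ) [hU : Nonempty (Col n r)] : r ≤ n :=
  let ⟨U⟩ := hU
  U.2 ▸ card_finset_fin_le U.1

lemma uniformCol_toOuterMeasure (p : Col n r → Prop) [DecidablePred p] :
    (uniformCol n r).toOuterMeasure {U | p U} = #{U | p U} / (n.choose r : ℝ≥0∞) := by
  rw [PMF.toOuterMeasure_uniformOfFintype_apply, Fintype.card_subtype]
  congr 2
  rw [Fintype.card_finset_len, Fintype.card_fin]

lemma uniformCol_superset_le (hn : n ≠ 0) (A : Finset (Fin n)) :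
    (uniformCol n r).toOuterMeasure {U | A ⊆ U.1} ≤ (r / n : ℝ≥0∞) ^ #A := by
  classical
  rw [uniformCol_toOuterMeasure]
  rcases le_or_gt #A r with hA | hA
  · have hcount : #{U : Col n r | A ⊆ U.1} * n ^ #A ≤ r ^ #A * n.choose r :=
      (Nat.mul_le_mul_right _ (choose_le_card_supersets A)).trans
        (choose_sub_mul_pow_le hA (le_of_nonempty_col n r))
    have hn' : (n : ℝ≥0∞) ^ #A ≠ 0 := pow_ne_zero _ (Nat.cast_ne_zero.2 hn)
    refine ENNReal.div_le_of_le_mul ?_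
    rw [div_eq_mul_inv, mul_pow, ← ENNReal.inv_pow, mul_right_comm, ← div_eq_mul_inv,
      ENNReal.le_div_iff_mul_le (.inl hn') (.inl (by finiteness))]
    exact_mod_cast hcount
  · have : #{U : Col n r | A ⊆ U.1} = 0 := by
      rw [card_eq_zero, filter_eq_empty_iff]
      exact fun U _ hU => hA.not_ge (U.2 ▸ card_le_card hU)
    simp [this]

lemma uniformCol_card_inter_le (hn : n ≠ 0) (a : ℕ) (Y : Finset (Fin n)) :
    (uniformCol n r).toOuterMeasure {U | a ≤ #(U.1 ∩ Y)} ≤ (#Y * (r / n) : ℝ≥0∞) ^ a := by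
  have hcover : {U : Col n r | a ≤ #(U.1 ∩ Y)} ⊆ ⋃ A ∈ powersetCard a Y, {U | A ⊆ U.1} := by
    intro U hU
    obtain ⟨A, hA, hcard⟩ := exists_subset_card_eq hU
    exact Set.mem_biUnion (mem_coe.2 (mem_powersetCard.2 ⟨hA.trans inter_subset_right, hcard⟩))
      (hA.trans inter_subset_left)
  calc _ ≤ (uniformCol n r).toOuterMeasure (⋃ A ∈ powersetCard a Y, {U | A ⊆ U.1}) :=
        MeasureTheory.measure_mono hcover
    _ ≤ ∑ A ∈ powersetCard a Y, (uniformCol n r).toOuterMeasure {U | A ⊆ U.1} :=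
        MeasureTheory.measure_biUnion_finset_le _ _
    _ ≤ ∑ _ ∈ powersetCard a Y, (r / n : ℝ≥0∞) ^ a :=
        sum_le_sum fun _ hA => (mem_powersetCard.1 hA).2 ▸ uniformCol_superset_le hn _
    _ = (#Y).choose a * (r / n : ℝ≥0∞) ^ a := by
        rw [sum_const, card_powersetCard, nsmul_eq_mul]
    _ ≤ (#Y * (r / n) : ℝ≥0∞) ^ a := by
        rw [mul_pow]
        gcongr
        exact_mod_cast Nat.choose_le_pow _ _

lemma uniformCol_not_disjoint_le (hn : n ≠ 0) (Y : Finset (Fin n)) :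
    (uniformCol n r).toOuterMeasure {U | ¬Disjoint U.1 Y} ≤ (#Y * (r / n) : ℝ≥0∞) := by
  simpa only [pow_one, Nat.one_le_iff_ne_zero, ne_eq, card_eq_zero, disjoint_iff_inter_eq_empty]
    using uniformCol_card_inter_le hn 1 Y

lemma uniformCol_not_double_hit_le (hr : 2 ≤ r) {X₁ X₂ Z : Finset (Fin n)} (h₁ : X₁ ⊆ Z)
    (h₂ : X₂ ⊆ Z) (h : Disjoint X₁ X₂) (hZ : 2 * (#Z + r) ≤ n) :
    (uniformCol n r).toOuterMeasure {U | ¬∃ x₁ ∈ X₁, ∃ x₂ ∈ X₂, U.1 ∩ Z = {x₁, x₂}} ≤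
      1 - #X₁ * #X₂ / (2 ^ (r - 2) * n ^ 2) := by
  classical
  rw [← Set.compl_ofPred, toOuterMeasure_compl, uniformCol_toOuterMeasure]
  refine tsub_le_tsub_left ?_ _
  have hchoose : (n.choose r : ℝ≥0∞) ≠ 0 :=
    Nat.cast_ne_zero.2 (Nat.choose_pos (le_of_nonempty_col n r)).ne'
  rw [ENNReal.le_div_iff_mul_le (.inl hchoose) (.inl (by finiteness)),
    ENNReal.mul_div_right_comm.symm]
  refine ENNReal.div_le_of_le_mul' ?_
  norm_cast
  calc #X₁ * #X₂ * n.choose r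
      ≤ #X₁ * #X₂ * (2 ^ (r - 2) * n ^ 2 * (n - #Z).choose (r - 2)) :=
        Nat.mul_le_mul_left _ (mul_choose_le_of_two_mul_le hr hZ)
    _ = 2 ^ (r - 2) * n ^ 2 * (#X₁ * #X₂ * (n - #Z).choose (r - 2)) := by ring
    _ ≤ _ := Nat.mul_le_mul_left _ (card_double_hit_ge hr h₁ h₂ h)

end RandomSet

lemma toOuterMeasure_le_one {α : Type*} (p : PMF α) (A : Set α) : p.toOuterMeasure A ≤ 1 :=
  calc p.toOuterMeasure A
      ≤ p.toOuterMeasure p.support := p.toOuterMeasure_mono Set.inter_subset_right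
    _ = 1 := (p.toOuterMeasure_apply_eq_one_iff _).2 subset_rfl

lemma toOuterMeasure_bind_le {α β : Type*} {p : PMF α} {f : α → PMF β} {A : Set α} {B : Set β}
    {ε : ℝ≥0∞} (h : ∀ a ∈ p.support, a ∉ A → (f a).toOuterMeasure B ≤ ε) :
    (p.bind f).toOuterMeasure B ≤ p.toOuterMeasure A + ε := by
  have hterm : ∀ a, p a * (f a).toOuterMeasure B ≤ A.indicator p a + p a * ε := by
    intro a
    by_cases ha : a ∈ A
    · rw [Set.indicator_of_mem ha]
      exact (mul_le_of_le_one_right' (toOuterMeasure_le_one _ _)).trans le_self_add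
    · rw [Set.indicator_of_notMem ha, zero_add]
      by_cases hp : a ∈ p.support
      · gcongr
        exact h a hp ha
      · simp [(p.apply_eq_zero_iff a).2 hp]
  calc (p.bind f).toOuterMeasure B = ∑' a, p a * (f a).toOuterMeasure B :=
        p.toOuterMeasure_bind_apply f B
    _ ≤ ∑' a, (A.indicator p a + p a * ε) := ENNReal.tsum_le_tsum hterm
    _ = p.toOuterMeasure A + ε := by
        rw [ENNReal.tsum_add, ENNReal.tsum_mul_right, p.tsum_coe, one_mul, p.toOuterMeasure_apply]

/-- The vertex set of the edge created in a round. -/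
def edgeSet (p : Step n r s) : Finset (Fin n) := p.1.1 ∪ p.2.1

lemma card_edgeSet_le (hrs : r ≤ s) (p : Step n r s) : #(edgeSet p) ≤ s :=
  calc #(edgeSet p) ≤ #p.1.1 + #p.2.1 := card_union_le _ _
    _ = s := by rw [p.1.2, p.2.2, Nat.add_sub_cancel' hrs]

/-- The set `U` has at least `a` vertices in the union of two edges of the history `h`. -/
def HitsTwoEdges (a : ℕ) (h : List (Step n r s)) (U : Finset (Fin n)) : Prop :=
  ∃ p₁ ∈ h, ∃ p₂ ∈ h, a ≤ #(U ∩ (edgeSet p₁ ∪ edgeSet p₂))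

/-- In some round, the random set had at least `a` vertices in the union of two earlier edges. -/
def HasDoubleHit (a : ℕ) : List (Step n r s) → Prop
  | [] => False
  | p :: h => HasDoubleHit a h ∨ HitsTwoEdges a h p.1.1

lemma uniformCol_hitsTwoEdges_le [Nonempty (Col n r)] (hn : n ≠ 0) (hrs : r ≤ s) (a : ℕ)
    (h : List (Step n r s)) :
    (uniformCol n r).toOuterMeasure {U | HitsTwoEdges a h U.1} ≤
      h.length ^ 2 * (2 * s * (r / n) : ℝ≥0∞) ^ a := by
  let hits (q : Step n r s × Step n r s) : Set (Col n r) :=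
    {U | a ≤ #(U.1 ∩ (edgeSet q.1 ∪ edgeSet q.2))}
  have hcover : {U : Col n r | HitsTwoEdges a h U.1} ⊆
      ⋃ q ∈ h.toFinset ×ˢ h.toFinset, hits q := by
    rintro U ⟨p₁, h₁, p₂, h₂, hU⟩
    simp only [Set.mem_iUnion]
    exact ⟨(p₁, p₂), mem_product.2 ⟨List.mem_toFinset.2 h₁, List.mem_toFinset.2 h₂⟩, hU⟩
  have hpair : ∀ q, (uniformCol n r).toOuterMeasure (hits q) ≤ (2 * s * (r / n) : ℝ≥0∞) ^ a := by
    intro q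
    have hcard : #(edgeSet q.1 ∪ edgeSet q.2) ≤ 2 * s :=
      calc _ ≤ #(edgeSet q.1) + #(edgeSet q.2) := card_union_le _ _
        _ ≤ s + s := add_le_add (card_edgeSet_le hrs _) (card_edgeSet_le hrs _)
        _ = 2 * s := (two_mul s).symm
    refine (uniformCol_card_inter_le hn a _).trans ?_
    gcongr
    exact_mod_cast hcard
  calc _ ≤ (uniformCol n r).toOuterMeasure (⋃ q ∈ h.toFinset ×ˢ h.toFinset, hits q) :=
        MeasureTheory.measure_mono hcover
    _ ≤ ∑ q ∈ h.toFinset ×ˢ h.toFinset, (uniformCol n r).toOuterMeasure (hits q) :=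
        MeasureTheory.measure_biUnion_finset_le _ _
    _ ≤ ∑ _q ∈ h.toFinset ×ˢ h.toFinset, (2 * s * (r / n) : ℝ≥0∞) ^ a :=
        sum_le_sum fun q _ => hpair q
    _ = #h.toFinset ^ 2 * (2 * s * (r / n) : ℝ≥0∞) ^ a := by
        rw [sum_const, card_product, nsmul_eq_mul, Nat.cast_mul, sq]
    _ ≤ h.length ^ 2 * (2 * s * (r / n) : ℝ≥0∞) ^ a := by
        gcongr
        exact List.toFinset_card_le h

lemma length_of_mem_support_historyPMF (hU : Nonempty (Col n r)) (S : Strategy n r s) {t : ℕ}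
    {h : List (Step n r s)} (hh : h ∈ (historyPMF hU S t).support) : h.length = t := by
  induction t generalizing h with
  | zero => simpa [historyPMF] using hh
  | succ t ih =>
    simp only [historyPMF, PMF.mem_support_bind_iff, PMF.mem_support_map_iff] at hh
    obtain ⟨h', hh', U, -, V, -, rfl⟩ := hh
    rw [List.length_cons, ih hh']

theorem historyPMF_hasDoubleHit_le (hn : n ≠ 0) (hrs : r ≤ s) (hU : Nonempty (Col n r))
    (S : Strategy n r s) (a t : ℕ) :
    (historyPMF hU S t).toOuterMeasure {h | HasDoubleHit a h} ≤
      t ^ 3 * (2 * s * (r / n) : ℝ≥0∞) ^ a := by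
  set κ : ℝ≥0∞ := (2 * s * (r / n) : ℝ≥0∞) ^ a
  induction t with
  | zero => simp [historyPMF, HasDoubleHit]
  | succ t ih =>
    have hround : ∀ h ∈ (historyPMF hU S t).support, h ∉ {h | HasDoubleHit a h} →
        ((uniformCol n r).bind fun U => (S h U).map fun V => (U, V) :: h).toOuterMeasure
          {h | HasDoubleHit a h} ≤ t ^ 2 * κ := by
      intro h hh hnot
      calc _ ≤ (uniformCol n r).toOuterMeasure {U | HitsTwoEdges a h U.1} + 0 := by
            refine toOuterMeasure_bind_le fun U _ hUmiss => ?_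
            rw [PMF.toOuterMeasure_map_apply, nonpos_iff_eq_zero,
              PMF.toOuterMeasure_apply_eq_zero_iff, Set.disjoint_right]
            exact fun V hV => (hV.elim hnot hUmiss).elim
        _ ≤ t ^ 2 * κ := by
            rw [add_zero, ← length_of_mem_support_historyPMF hU S hh]
            exact uniformCol_hitsTwoEdges_le hn hrs a h
    calc _ ≤ t ^ 3 * κ + t ^ 2 * κ := (toOuterMeasure_bind_le hround).trans (by gcongr)
      _ = (t ^ 3 + t ^ 2 : ℕ) * κ := by push_cast; ring
      _ ≤ ((t + 1) ^ 3 : ℕ) * κ := by gcongr; linarith [Nat.zero_le (2 * t ^ 2 + 3 * t + 1)]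
      _ = (t + 1 : ℕ) ^ 3 * κ := by push_cast; rfl

section LastEdge

variable {V : Type*} {E : Finset (Finset V)}

lemma map_eq_edgeSet {φ : V ↪ Fin n} {e : Finset V} {p : Step n r s}
    (h : e.val.map φ = p.1.1.val + p.2.1.val) : e.map φ = edgeSet p := by
  ext v
  rw [← mem_val, map_val, h, Multiset.mem_add, mem_val, mem_val, edgeSet, mem_union]

lemma containsCopy_cons {p : Step n r s} {h : List (Step n r s)} (hE : ContainsCopy E (p :: h)) :
    ContainsCopy E h ∨ ∃ φ : V ↪ Fin n, ∃ e ∈ E, e.val.map φ = p.1.1.val + p.2.1.val ∧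
      ∀ f ∈ E, f ≠ e → ∃ q ∈ h, f.map φ = edgeSet q := by
  obtain ⟨φ, hφ⟩ := hE
  by_cases hold : ∀ e ∈ E, ∃ q ∈ h, e.val.map φ = q.1.1.val + q.2.1.val
  · exact .inl ⟨φ, hold⟩
  push Not at hold
  obtain ⟨e, he, hnew⟩ := hold
  have hep : e.val.map φ = p.1.1.val + p.2.1.val := by
    obtain ⟨q, hq, heq⟩ := hφ e he
    obtain rfl | hq := List.mem_cons.1 hq
    exacts [heq, absurd heq (hnew q hq)]
  refine .inr ⟨φ, e, he, hep, fun f hf hfe => ?_⟩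
  obtain ⟨q, hq, hfq⟩ := hφ f hf
  obtain rfl | hq := List.mem_cons.1 hq
  · exact absurd (map_injective φ ((map_eq_edgeSet hfq).trans (map_eq_edgeSet hep).symm)) hfe
  · exact ⟨q, hq, map_eq_edgeSet hfq⟩

-- The edge of the copy that is completed last already has both its neighbours, so its random
-- part meets their union.
theorem hasDoubleHit_of_containsCopy [DecidableEq V] {c : ℕ} (hrs : r ≤ s) (hE : E.Nonempty)
    (hnbr : ∀ e ∈ E, ∃ f ∈ E, ∃ g ∈ E, f ≠ e ∧ g ≠ e ∧ c ≤ #(e ∩ (f ∪ g)))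
    {h : List (Step n r s)} (hcopy : ContainsCopy E h) : HasDoubleHit (r + c - s) h := by
  induction h with
  | nil =>
    obtain ⟨φ, hφ⟩ := hcopy
    obtain ⟨e, he⟩ := hE
    obtain ⟨p, hp, -⟩ := hφ e he
    exact absurd hp List.not_mem_nil
  | cons p h ih =>
    obtain hcopy | ⟨φ, e, he, hep, hothers⟩ := containsCopy_cons hcopy
    · exact .inl (ih hcopy)
    obtain ⟨f, hf, g, hg, hfe, hge, hc⟩ := hnbr e he
    obtain ⟨p₁, hp₁, hfp⟩ := hothers f hf hfe
    obtain ⟨p₂, hp₂, hgp⟩ := hothers g hg hge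
    refine .inr ⟨p₁, hp₁, p₂, hp₂, ?_⟩
    set I := (e ∩ (f ∪ g)).map φ
    have hI : I ⊆ edgeSet p := map_eq_edgeSet hep ▸ map_subset_map.2 inter_subset_left
    have hIsub : I ⊆ edgeSet p₁ ∪ edgeSet p₂ := by
      rw [← hfp, ← hgp, ← map_union]
      exact map_subset_map.2 inter_subset_right
    have hIcard : c ≤ #I := by rwa [card_map]
    have hunion : #(p.1.1 ∪ I) ≤ s :=
      (card_le_card (union_subset subset_union_left hI)).trans (card_edgeSet_le hrs p)
    have hcount := card_union_add_card_inter p.1.1 I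
    rw [p.1.2] at hcount
    exact le_trans (by omega) (card_le_card (inter_subset_inter_left hIsub))

end LastEdge

section LooseCycle

variable {ℓ m : ℕ}

/-- The `j`-th edge of the `ℓ`-loose `s`-uniform cycle with `m` edges; the index is read
modulo `m`. -/
def looseCycleEdge (s ℓ m j : ℕ) : Finset (ZMod ((s - ℓ) * m)) :=
  (range s).image fun i => ((j * (s - ℓ) + i : ℕ) : ZMod ((s - ℓ) * m))

lemma looseCycleEdge_add_self (s ℓ m j : ℕ) :
    looseCycleEdge s ℓ m (j + m) = looseCycleEdge s ℓ m j := by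
  refine image_congr fun i _ => ?_
  simp only [ZMod.natCast_eq_natCast_iff, add_mul, mul_comm m]
  exact Nat.ModEq.add_right _ Nat.add_modEq_right

lemma looseCycleEdge_mem (hm : m ≠ 0) (j : ℕ) : looseCycleEdge s ℓ m j ∈ looseCycle s ℓ m := by
  refine mem_image.2 ⟨j % m, mem_range.2 (Nat.mod_lt _ (Nat.pos_of_ne_zero hm)), ?_⟩
  have hperiod : ∀ i, looseCycleEdge s ℓ m (j % m + m * i) = looseCycleEdge s ℓ m (j % m) := by
    intro i
    induction i with
    | zero => rw [mul_zero, add_zero]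
    | succ i ih => rw [mul_add_one, ← add_assoc, looseCycleEdge_add_self, ih]
  exact (hperiod (j / m)).symm.trans (by rw [Nat.mod_add_div])

lemma eq_of_natCast_add_eq {N a i i' : ℕ} (h : ((a + i : ℕ) : ZMod N) = ((a + i' : ℕ) : ZMod N))
    (hi : i < N) (hi' : i' < N) : i = i' :=
  (Nat.ModEq.add_left_cancel' _ ((ZMod.natCast_eq_natCast_iff _ _ _).1 h)).eq_of_lt_of_lt hi hi'

lemma looseCycleEdge_ne_succ (hℓ : 1 ≤ ℓ) (hm : 3 ≤ m) (hs : 2 * ℓ ≤ s) (j : ℕ) :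
    looseCycleEdge s ℓ m j ≠ looseCycleEdge s ℓ m (j + 1) := by
  intro heq
  have hfirst : ((j * (s - ℓ) + 0 : ℕ) : ZMod ((s - ℓ) * m)) ∈ looseCycleEdge s ℓ m j :=
    mem_image_of_mem _ (mem_range.2 (by omega))
  rw [heq] at hfirst
  obtain ⟨i, hi, hcast⟩ := mem_image.1 hfirst
  rw [mem_range] at hi
  rw [add_one_mul, add_assoc] at hcast
  have := Nat.mul_le_mul_left (s - ℓ) hm
  have := eq_of_natCast_add_eq hcast (by omega) (by omega)
  omega

lemma two_mul_le_card_inter_neighbours (hm : 2 ≤ m) (hs : 2 * ℓ ≤ s) (j : ℕ) :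
    2 * ℓ ≤ #(looseCycleEdge s ℓ m (j + 1) ∩
      (looseCycleEdge s ℓ m j ∪ looseCycleEdge s ℓ m (j + 2))) := by
  set pos : ℕ → ZMod ((s - ℓ) * m) := fun i => (((j + 1) * (s - ℓ) + i : ℕ) : ZMod _)
  have hlen := Nat.mul_le_mul_left (s - ℓ) hm
  have hinj : Set.InjOn pos (range ℓ ∪ Ico (s - ℓ) s : Finset ℕ) := by
    intro i hi i' hi' h
    simp only [coe_union, coe_range, coe_Ico, Set.mem_union, Set.mem_Iio, Set.mem_Ico] at hi hi'
    exact eq_of_natCast_add_eq h (by omega) (by omega)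
  have hcard : #(range ℓ ∪ Ico (s - ℓ) s) = 2 * ℓ := by
    rw [card_union_of_disjoint, card_range, Nat.card_Ico]
    · omega
    · rw [disjoint_left]
      intro i
      simp only [mem_range, mem_Ico]
      omega
  rw [← hcard, ← card_image_of_injOn hinj]
  refine card_le_card fun v hv => ?_
  obtain ⟨i, hi, rfl⟩ := mem_image.1 hv
  simp only [mem_union, mem_range, mem_Ico] at hi
  refine mem_inter.2 ⟨mem_image_of_mem _ (mem_range.2 (by omega)), ?_⟩
  obtain hi | hi := hi
  · refine mem_union_left _ (mem_image.2 ⟨s - ℓ + i, mem_range.2 (by omega), ?_⟩)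
    simp only [pos]
    congr 1
    ring
  · obtain ⟨i', rfl⟩ := Nat.exists_eq_add_of_le hi.1
    refine mem_union_right _ (mem_image.2 ⟨i', mem_range.2 (by omega), ?_⟩)
    simp only [pos]
    congr 1
    ring

lemma looseCycle_exists_neighbours (hℓ : 1 ≤ ℓ) (hm : 3 ≤ m) (hs : 2 * ℓ ≤ s) :
    ∀ e ∈ looseCycle s ℓ m, ∃ f ∈ looseCycle s ℓ m, ∃ g ∈ looseCycle s ℓ m,
      f ≠ e ∧ g ≠ e ∧ 2 * ℓ ≤ #(e ∩ (f ∪ g)) := by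
  intro e he
  obtain ⟨j, -, rfl⟩ := mem_image.1 he
  have hm0 : m ≠ 0 := by omega
  obtain ⟨i, hi⟩ : ∃ i, i + 1 = j + m := ⟨j + m - 1, by omega⟩
  have hj : looseCycleEdge s ℓ m (i + 1) = looseCycleEdge s ℓ m j := by
    rw [hi, looseCycleEdge_add_self]
  change ∃ f ∈ _, ∃ g ∈ _, f ≠ looseCycleEdge s ℓ m j ∧ g ≠ looseCycleEdge s ℓ m j ∧
    2 * ℓ ≤ #(looseCycleEdge s ℓ m j ∩ (f ∪ g))
  rw [← hj]
  exact ⟨_, looseCycleEdge_mem hm0 i, _, looseCycleEdge_mem hm0 (i + 2),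
    looseCycleEdge_ne_succ hℓ hm hs i, (looseCycleEdge_ne_succ hℓ hm hs (i + 1)).symm,
    two_mul_le_card_inter_neighbours (by omega) hs i⟩

end LooseCycle

section Exponent

lemma elog_coe (t : ℕ) : elog t = (Real.log t : ℝ) := rfl

lemma elog_mono : Monotone elog := by
  intro a b h
  induction b with
  | top => exact le_top
  | coe b =>
    lift a to ℕ using (h.trans_lt (ENat.natCast_lt_top b)).ne
    rw [elog_coe, elog_coe, EReal.coe_le_coe_iff]
    obtain rfl | ha := a.eq_zero_or_pos
    · simpa using Real.log_natCast_nonneg b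
    · exact Real.log_le_log (Nat.cast_pos.2 ha) (Nat.cast_le.2 (ENat.natCast_le_natCast.1 h))

lemma tendsto_log_mul_rpow_div_log {c : ℝ} (hc : 0 < c) (α : ℝ) :
    Tendsto (fun n : ℕ => ((Real.log (c * (n : ℝ) ^ α) * (Real.log n)⁻¹ : ℝ) : EReal)) atTop
      (nhds α) := by
  rw [EReal.tendsto_coe]
  have hlog : Tendsto (fun n : ℕ => Real.log n) atTop atTop :=
    Real.tendsto_log_atTop.comp tendsto_natCast_atTop_atTop
  have hlim := (hlog.inv_tendsto_atTop.const_mul (Real.log c)).add_const α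
  rw [mul_zero, zero_add] at hlim
  refine hlim.congr' ?_
  filter_upwards [eventually_ge_atTop 2] with n hn
  have hn1 : (1 : ℝ) < n := Nat.one_lt_cast.2 hn
  have := Real.log_pos hn1
  rw [Pi.inv_apply, Real.log_mul hc.ne' (by positivity), Real.log_rpow (by positivity)]
  field_simp

variable {V : Type*} {E : Finset (Finset V)} {α : ℝ}

lemma tauExp_le (hα : 0 ≤ α)
    (h : ∀ q < (1 : ℝ≥0∞), ∃ C : ℝ, 1 ≤ C ∧ ∀ᶠ n : ℕ in atTop, ∃ (S : Strategy n r s) (t : ℕ),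
      t ≤ C * (n : ℝ) ^ α ∧ q ≤ probContains n r s E S t) :
    tauExp r s E ≤ α := by
  refine iSup₂_le fun q hq => ?_
  obtain ⟨C, hC, hbound⟩ := h q hq.2
  rw [← (tendsto_log_mul_rpow_div_log (zero_lt_one.trans_le hC) α).limsup_eq]
  refine limsup_le_limsup ?_
  filter_upwards [hbound, eventually_ge_atTop 1] with n ⟨S, t, ht, hp⟩ hn
  have hn1 : (1 : ℝ) ≤ n := Nat.one_le_cast.2 hn
  have hlog : Real.log t ≤ Real.log (C * (n : ℝ) ^ α) := by
    obtain rfl | ht0 := t.eq_zero_or_pos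
    · rw [Nat.cast_zero, Real.log_zero]
      exact Real.log_nonneg (one_le_mul_of_one_le_of_one_le hC (Real.one_le_rpow hn1 hα))
    · exact Real.log_le_log (Nat.cast_pos.2 ht0) ht
  rw [EReal.coe_mul]
  refine mul_le_mul_of_nonneg_right ?_
    (EReal.coe_nonneg.2 (inv_nonneg.2 (Real.log_nonneg hn1)))
  calc elog (tauQ r s E q n) ≤ elog t := elog_mono ((iInf_le _ S).trans (sInf_le ⟨t, rfl, hp⟩))
    _ ≤ (Real.log (C * (n : ℝ) ^ α) : ℝ) := EReal.coe_le_coe_iff.2 hlog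

lemma le_tauExp {c : ℝ} (hc : 0 < c) {q : ℝ≥0∞} (hq : q ∈ Set.Ioo 0 1)
    (h : ∀ᶠ n : ℕ in atTop, ∀ (S : Strategy n r s) (t : ℕ),
      q ≤ probContains n r s E S t → c * (n : ℝ) ^ α ≤ t) :
    (α : EReal) ≤ tauExp r s E := by
  refine le_trans ?_ (le_iSup₂ (f := fun q (_ : q ∈ Set.Ioo (0 : ℝ≥0∞) 1) =>
    limsup (fun n : ℕ => elog (tauQ r s E q n) * (((Real.log n)⁻¹ : ℝ) : EReal)) atTop) q hq)
  rw [← (tendsto_log_mul_rpow_div_log hc α).limsup_eq]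
  refine limsup_le_limsup ?_
  filter_upwards [h, eventually_ge_atTop 1] with n hbound hn
  have hn1 : (1 : ℝ) ≤ n := Nat.one_le_cast.2 hn
  have htau : (⌈c * (n : ℝ) ^ α⌉₊ : ℕ∞) ≤ tauQ r s E q n := by
    refine le_iInf fun S => le_sInf ?_
    rintro _ ⟨t, rfl, ht⟩
    exact ENat.natCast_le_natCast.2 (Nat.ceil_le.2 (hbound S t ht))
  rw [EReal.coe_mul]
  refine mul_le_mul_of_nonneg_right ?_
    (EReal.coe_nonneg.2 (inv_nonneg.2 (Real.log_nonneg hn1)))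
  calc ((Real.log (c * (n : ℝ) ^ α) : ℝ) : EReal) ≤ elog ⌈c * (n : ℝ) ^ α⌉₊ := by
        rw [elog_coe, EReal.coe_le_coe_iff]
        exact Real.log_le_log (by positivity) (Nat.le_ceil _)
    _ ≤ elog (tauQ r s E q n) := elog_mono htau

end Exponent

section LowerBound

variable {V : Type*} [DecidableEq V] {E : Finset (Finset V)} {c : ℕ}

lemma probContains_le (hn : n ≠ 0) (hrs : r ≤ s) (hE : E.Nonempty)
    (hnbr : ∀ e ∈ E, ∃ f ∈ E, ∃ g ∈ E, f ≠ e ∧ g ≠ e ∧ c ≤ #(e ∩ (f ∪ g)))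
    (S : Strategy n r s) (t : ℕ) :
    probContains n r s E S t ≤ t ^ 3 * (2 * s * (r / n) : ℝ≥0∞) ^ (r + c - s) := by
  unfold probContains
  split_ifs with hrn
  · refine le_trans ?_ (historyPMF_hasDoubleHit_le hn hrs (col_nonempty hrn) S (r + c - s) t)
    exact MeasureTheory.measure_mono fun _ hcopy => hasDoubleHit_of_containsCopy hrs hE hnbr hcopy
  · exact zero_le

theorem le_tauExp_of_exists_neighbours (hrs : r ≤ s) (hE : E.Nonempty)
    (hnbr : ∀ e ∈ E, ∃ f ∈ E, ∃ g ∈ E, f ≠ e ∧ g ≠ e ∧ c ≤ #(e ∩ (f ∪ g))) :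
    ((((r + c - s : ℕ) : ℝ) / 3 : ℝ) : EReal) ≤ tauExp r s E := by
  set a := r + c - s
  set B : ℝ := 2 * (2 * s * r) ^ a + 1
  have hB : 0 < B := by positivity
  refine le_tauExp (c := B⁻¹ ^ (1 / 3 : ℝ)) (by positivity) (q := 2⁻¹)
    ⟨by simp, by simp⟩ ?_
  filter_upwards [eventually_ge_atTop 1] with n hn S t ht
  have hn0 : (0 : ℝ) < n := Nat.cast_pos.2 hn
  have hcube : B⁻¹ * (n : ℝ) ^ a ≤ (t : ℝ) ^ 3 := by
    have hhalf : (2 : ℝ)⁻¹ ≤ t ^ 3 * (2 * s * (r / n)) ^ a := by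
      have hp := ht.trans (probContains_le (by omega) hrs hE hnbr S t)
      have := ENNReal.toReal_mono (by finiteness) hp
      simpa using this
    have hpow : (2 * s * (r / n) : ℝ) ^ a * n ^ a = (2 * s * r) ^ a := by
      rw [← mul_pow]
      field_simp
    rw [inv_mul_le_iff₀ hB]
    calc (n : ℝ) ^ a = 2 * (2⁻¹ * n ^ a) := by ring
      _ ≤ 2 * (t ^ 3 * (2 * s * (r / n)) ^ a * n ^ a) := by gcongr
      _ = 2 * (2 * s * r) ^ a * t ^ 3 := by rw [mul_assoc _ _ ((n : ℝ) ^ a), hpow]; ring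
      _ ≤ B * t ^ 3 := by gcongr; simp only [B]; linarith
  calc B⁻¹ ^ (1 / 3 : ℝ) * (n : ℝ) ^ ((a : ℝ) / 3) = (B⁻¹ * (n : ℝ) ^ a) ^ (1 / 3 : ℝ) := by
        rw [Real.mul_rpow (by positivity) (by positivity), ← Real.rpow_natCast_mul hn0.le,
          mul_one_div]
    _ ≤ ((t : ℝ) ^ 3) ^ (1 / 3 : ℝ) := Real.rpow_le_rpow (by positivity) hcube (by norm_num)
    _ = t := by rw [← Real.rpow_natCast_mul t.cast_nonneg]; norm_num

end LowerBound

theorem le_tauExp_looseCycle {ℓ m : ℕ} (hℓ : 1 ≤ ℓ) (hm : 3 ≤ m) (hs : 2 * ℓ ≤ s) (hrs : r ≤ s) :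
    ((((r + 2 * ℓ - s : ℕ) : ℝ) / 3 : ℝ) : EReal) ≤ tauExp r s (looseCycle s ℓ m) :=
  le_tauExp_of_exists_neighbours hrs ⟨_, looseCycleEdge_mem (by omega) 0⟩
    (looseCycle_exists_neighbours hℓ hm hs)

section OptimalPlay

variable [Nonempty (Col n r)] {Q : List (Step n r s) → Prop}

/-- The supremum, over all ways of playing the next `T` rounds from the history `h`, of the
probability that `Q` holds afterwards. -/
noncomputable def optimalValue (Q : List (Step n r s) → Prop) :
    ℕ → List (Step n r s) → ℝ≥0∞
  | 0, h => {h | Q h}.indicator 1 h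
  | T + 1, h => ∑' U, uniformCol n r U * ⨆ V, optimalValue Q T ((U, V) :: h)

lemma one_le_optimalValue_zero {h : List (Step n r s)} (hh : Q h) : 1 ≤ optimalValue Q 0 h :=
  (Set.indicator_of_mem (s := {h | Q h}) hh (1 : List (Step n r s) → ℝ≥0∞)).ge

lemma le_iSup_optimalValue (T : ℕ) (h : List (Step n r s)) (U : Col n r) (V : Col n (s - r)) :
    optimalValue Q T ((U, V) :: h) ≤ ⨆ V, optimalValue Q T ((U, V) :: h) :=
  le_iSup (fun V => optimalValue Q T ((U, V) :: h)) V

lemma one_le_optimalValue_succ_add {T : ℕ} {h : List (Step n r s)} {g : Col n r → ℝ≥0∞}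
    (hg : ∀ U, 1 ≤ (⨆ V, optimalValue Q T ((U, V) :: h)) + g U) :
    1 ≤ optimalValue Q (T + 1) h + ∑' U, uniformCol n r U * g U := by
  rw [optimalValue, ← ENNReal.tsum_add, ← (uniformCol n r).tsum_coe]
  simp only [← mul_add]
  exact ENNReal.tsum_le_tsum fun U => le_mul_of_one_le_right' (hg U)

section Persistent

variable (hQ : ∀ ⦃h h'⦄, h ⊆ h' → Q h → Q h')
include hQ

lemma optimalValue_mono {h h' : List (Step n r s)} (hh : h ⊆ h') (T : ℕ) :
    optimalValue Q T h ≤ optimalValue Q T h' := by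
  induction T generalizing h h' with
  | zero =>
    by_cases hQh : Q h
    · exact (one_le_optimalValue_zero (hQ hh hQh)).trans' (Set.indicator_le_self' (by simp) h)
    · rw [optimalValue, Set.indicator_of_notMem (s := {h | Q h}) hQh]
      exact zero_le
  | succ T ih =>
    unfold optimalValue
    gcongr with U V
    exact ih (List.cons_subset_cons _ hh)

variable [Nonempty (Col n (s - r))]

lemma optimalValue_le_iSup_cons (T : ℕ) (h : List (Step n r s)) (U : Col n r) :
    optimalValue Q T h ≤ ⨆ V, optimalValue Q T ((U, V) :: h) :=
  let ⟨V⟩ := ‹Nonempty (Col n (s - r))›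
  (optimalValue_mono hQ (List.subset_cons_self _ _) T).trans (le_iSup_optimalValue T h U V)

lemma optimalValue_le_add (h : List (Step n r s)) (L T : ℕ) :
    optimalValue Q T h ≤ optimalValue Q (L + T) h := by
  induction L with
  | zero => rw [zero_add]
  | succ L ih =>
    calc optimalValue Q T h ≤ ∑' U, uniformCol n r U * optimalValue Q (L + T) h := by
          rwa [ENNReal.tsum_mul_right, PMF.tsum_coe, one_mul]
      _ ≤ ∑' U, uniformCol n r U * ⨆ V, optimalValue Q (L + T) ((U, V) :: h) := by
          gcongr with U
          exact optimalValue_le_iSup_cons hQ (L + T) h U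
      _ = optimalValue Q (L + 1 + T) h := by rw [add_right_comm, optimalValue]

lemma one_le_optimalValue_of_retry {h : List (Step n r s)} {T : ℕ} {ε δ : ℝ≥0∞}
    (hfail : (uniformCol n r).toOuterMeasure
      {U | ¬∃ V, 1 ≤ optimalValue Q T ((U, V) :: h) + ε} ≤ δ) (L : ℕ) :
    1 ≤ optimalValue Q (L + T) h + (ε + δ ^ L) := by
  set bad := {U : Col n r | ¬∃ V, 1 ≤ optimalValue Q T ((U, V) :: h) + ε}
  induction L with
  | zero => rw [pow_zero]; exact le_add_self.trans le_add_self
  | succ L ih =>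
    have hround : ∀ U, 1 ≤ (⨆ V, optimalValue Q (L + T) ((U, V) :: h)) +
        (ε + bad.indicator 1 U * δ ^ L) := by
      intro U
      by_cases hU : U ∈ bad
      · rw [Set.indicator_of_mem hU, Pi.one_apply, one_mul]
        exact ih.trans (by gcongr; exact optimalValue_le_iSup_cons hQ (L + T) h U)
      · obtain ⟨V, hV⟩ := not_not.1 hU
        rw [Set.indicator_of_notMem hU, zero_mul, add_zero]
        refine hV.trans ?_
        gcongr
        exact (optimalValue_le_add hQ _ L T).trans (le_iSup_optimalValue _ h U V)
    rw [add_right_comm L 1 T]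
    refine (one_le_optimalValue_succ_add hround).trans ?_
    gcongr
    calc ∑' U, uniformCol n r U * (ε + bad.indicator 1 U * δ ^ L)
        = ε + (uniformCol n r).toOuterMeasure bad * δ ^ L := by
          simp only [mul_add, ← mul_assoc]
          rw [ENNReal.tsum_add, ENNReal.tsum_mul_right, ENNReal.tsum_mul_right, PMF.tsum_coe,
            one_mul, PMF.toOuterMeasure_apply]
          simp only [← Set.indicator_mul_right, Pi.one_apply, mul_one]
      _ ≤ ε + δ ^ (L + 1) := by rw [pow_succ']; gcongr

lemma one_le_optimalValue_of_levels {G : ℕ → List (Step n r s) → Prop} {N T : ℕ} {ε δ : ℝ≥0∞}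
    (L : ℕ) (hend : ∀ h, G N h → 1 ≤ optimalValue Q T h + ε)
    (hstep : ∀ k < N, ∀ h, G k h →
      (uniformCol n r).toOuterMeasure {U | ¬∃ V, G (k + 1) ((U, V) :: h)} ≤ δ)
    {h : List (Step n r s)} (h₀ : G 0 h) :
    1 ≤ optimalValue Q (N * L + T) h + (ε + N * δ ^ L) := by
  induction N generalizing G h with
  | zero => simpa using hend h h₀
  | succ N ih =>
    have hrest : ∀ h, G 1 h → 1 ≤ optimalValue Q (N * L + T) h + (ε + N * δ ^ L) := fun h h₁ =>
      ih (G := fun k => G (k + 1)) hend (fun k hk => hstep (k + 1) (by omega)) h₁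
    rw [show (N + 1) * L + T = L + (N * L + T) by ring, Nat.cast_add_one, add_one_mul,
      ← add_assoc ε]
    refine one_le_optimalValue_of_retry hQ (le_trans ?_ (hstep 0 N.succ_pos h h₀)) L
    exact MeasureTheory.measure_mono fun U hU ⟨V, hV⟩ => hU ⟨V, hrest _ hV⟩

end Persistent

lemma tsum_bind_mul {α β : Type*} (p : PMF α) (f : α → PMF β) (g : β → ℝ≥0∞) :
    ∑' b, p.bind f b * g b = ∑' a, p a * ∑' b, f a b * g b := by
  simp only [PMF.bind_apply, ← ENNReal.tsum_mul_right, ← ENNReal.tsum_mul_left, mul_assoc]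
  exact ENNReal.tsum_comm

lemma tsum_pure_mul {α : Type*} (a : α) (g : α → ℝ≥0∞) : ∑' b, PMF.pure a b * g b = g a := by
  rw [tsum_eq_single a fun b hb => by rw [PMF.pure_apply_of_ne a b hb, zero_mul],
    PMF.pure_apply_self, one_mul]

lemma exists_strategy_optimalValue_le [Nonempty (Col n (s - r))]
    (Q : List (Step n r s) → Prop) (t : ℕ) :
    ∃ S : Strategy n r s, optimalValue Q t [] ≤
      (historyPMF ‹Nonempty (Col n r)› S t).toOuterMeasure {h | Q h} := by
  have hmax : ∀ (h : List (Step n r s)) (U : Col n r), ∃ V,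
      optimalValue Q (t - (h.length + 1)) ((U, V) :: h) =
        ⨆ V, optimalValue Q (t - (h.length + 1)) ((U, V) :: h) :=
    fun _ _ => exists_eq_ciSup_of_finite
  choose best hbest using hmax
  let S : Strategy n r s := fun h U => PMF.pure (best h U)
  refine ⟨S, ?_⟩
  have hvalue : ∀ k ≤ t, optimalValue Q t [] =
      ∑' h, historyPMF ‹Nonempty (Col n r)› S k h * optimalValue Q (t - k) h := by
    intro k hk
    induction k with
    | zero => rw [historyPMF, tsum_pure_mul, Nat.sub_zero]
    | succ k ih =>
      rw [ih (by omega), historyPMF, tsum_bind_mul]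
      refine tsum_congr fun h => ?_
      by_cases hh : h ∈ (historyPMF ‹Nonempty (Col n r)› S k).support
      · have hlen := length_of_mem_support_historyPMF _ S hh
        rw [tsum_bind_mul, show t - k = t - (k + 1) + 1 by omega, optimalValue]
        simp only [S, PMF.pure_map, tsum_pure_mul, ← hlen, hbest]
      · rw [(PMF.apply_eq_zero_iff _ h).2 hh, zero_mul, zero_mul]
  rw [hvalue t le_rfl, PMF.toOuterMeasure_apply, Nat.sub_self]
  refine (tsum_congr fun h => ?_).le
  simp only [optimalValue, ← Set.indicator_mul_right, Pi.one_apply, mul_one]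

end OptimalPlay

section Paths

variable {h h' : List (Step n r s)} {ℓ k : ℕ} {A B C P W F : Finset (Fin n)}

lemma ContainsCopy.mono {V : Type*} {E : Finset (Finset V)} (hh : h ⊆ h')
    (hE : ContainsCopy E h) : ContainsCopy E h' :=
  let ⟨φ, hφ⟩ := hE
  ⟨φ, fun e he => let ⟨p, hp, hpe⟩ := hφ e he; ⟨p, hh hp, hpe⟩⟩

/-- The history contains an edge without repeated vertices whose vertex set is `F`. -/
def HasEdge (h : List (Step n r s)) (F : Finset (Fin n)) : Prop :=
  ∃ p ∈ h, p.1.1.val + p.2.1.val = F.val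

lemma HasEdge.mono (hh : h ⊆ h') (hF : HasEdge h F) : HasEdge h' F :=
  let ⟨p, hp, hpF⟩ := hF
  ⟨p, hh hp, hpF⟩

lemma hasEdge_cons (h : List (Step n r s)) {U : Col n r} {V : Col n (s - r)}
    (hUV : Disjoint U.1 V.1) (hF : U.1 ∪ V.1 = F) : HasEdge ((U, V) :: h) F :=
  ⟨(U, V), List.mem_cons_self, by rw [← hF, ← disjUnion_eq_union _ _ hUV, disjUnion_val]⟩

lemma exists_disjoint_card_eq {Z : Finset (Fin n)} {c : ℕ} (hZ : #Z + c ≤ n) :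
    ∃ X : Finset (Fin n), Disjoint X Z ∧ #X = c := by
  obtain ⟨X, hX, hcard⟩ := exists_subset_card_eq (s := Zᶜ) (n := c)
    (by rw [card_compl, Fintype.card_fin]; omega)
  exact ⟨X, subset_compl_iff_disjoint_right.1 hX, hcard⟩

/-- A loose path with `k` edges in the history `h`. Consecutive edges share `ℓ` vertices; `A` is
the set of the first `ℓ` vertices of the path, `B` the set of its last `ℓ` vertices and `W` its
whole vertex set. -/
inductive LoosePath (h : List (Step n r s)) (ℓ : ℕ) (A : Finset (Fin n)) :
    ℕ → Finset (Fin n) → Finset (Fin n) → Prop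
  | nil (hA : #A = ℓ) : LoosePath h ℓ A 0 A A
  | snoc {k : ℕ} {B C P W : Finset (Fin n)} (path : LoosePath h ℓ A k B W) (hP : #P = s - 2 * ℓ)
      (hC : #C = ℓ) (hPW : Disjoint P W) (hCW : Disjoint C (W ∪ P))
      (hedge : HasEdge h (B ∪ P ∪ C)) : LoosePath h ℓ A (k + 1) C (W ∪ P ∪ C)

namespace LoosePath

lemma mono (hh : h ⊆ h') (path : LoosePath h ℓ A k B W) : LoosePath h' ℓ A k B W := by
  induction path with
  | nil hA => exact nil hA
  | snoc _ hP hC hPW hCW hedge ih => exact ih.snoc hP hC hPW hCW (hedge.mono hh)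

lemma first_subset (path : LoosePath h ℓ A k B W) : A ⊆ W := by
  induction path with
  | nil => exact subset_rfl
  | snoc _ _ _ _ _ _ ih => exact ih.trans (subset_union_left.trans subset_union_left)

lemma last_subset (path : LoosePath h ℓ A k B W) : B ⊆ W := by
  cases path with
  | nil => exact subset_rfl
  | snoc => exact subset_union_right

lemma card_first (path : LoosePath h ℓ A k B W) : #A = ℓ := by
  induction path with
  | nil hA => exact hA
  | snoc _ _ _ _ _ _ ih => exact ih

lemma card_last (path : LoosePath h ℓ A k B W) : #B = ℓ := by
  cases path with
  | nil hA => exact hA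
  | snoc _ _ hC => exact hC

lemma disjoint_first_last (path : LoosePath h ℓ A (k + 1) B W) : Disjoint A B := by
  cases path with
  | snoc path _ _ _ hCW => exact (hCW.mono_right (path.first_subset.trans subset_union_left)).symm

lemma card_vertices (hs : 2 * ℓ ≤ s) (path : LoosePath h ℓ A k B W) :
    #W = k * (s - ℓ) + ℓ := by
  induction path with
  | nil hA => rw [hA, zero_mul, zero_add]
  | snoc _ hP hC hPW hCW _ ih =>
    rw [card_union_of_disjoint hCW.symm, card_union_of_disjoint hPW.symm, ih, hP, hC, add_one_mul]
    omega

end LoosePath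

lemma exists_enum_extend {α : Type*} [DecidableEq α] (f : ℕ → α) (a : ℕ) (X : Finset α) :
    ∃ g : ℕ → α, (∀ I ⊆ range a, I.image g = I.image f) ∧ (Ico a (a + #X)).image g = X := by
  induction X using Finset.induction_on with
  | empty => exact ⟨f, fun _ _ => rfl, by simp⟩
  | insert x X hx ih =>
    obtain ⟨g, hg, himage⟩ := ih
    have hupdate : ∀ I ⊆ range (a + #X), I.image (Function.update g (a + #X) x) = I.image g :=
      fun I hI => image_congr fun i hi =>
        Function.update_of_ne (mem_range.1 (hI hi)).ne _ _
    refine ⟨Function.update g (a + #X) x, fun I hI => ?_, ?_⟩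
    · rw [hupdate I (hI.trans (range_mono (Nat.le_add_right _ _))), hg I hI]
    · rw [card_insert_of_notMem hx, ← add_assoc, Nat.Ico_succ_right_eq_insert_Ico (by omega),
        image_insert, Function.update_self,
        hupdate _ fun i hi => mem_range.2 (mem_Ico.1 hi).2, himage]

lemma LoosePath.exists_enum [NeZero n] (hs : 2 * ℓ ≤ s) (path : LoosePath h ℓ A k B W) :
    ∃ f : ℕ → Fin n, (range (k * (s - ℓ) + ℓ)).image f = W ∧ (range ℓ).image f = A ∧
      (Ico (k * (s - ℓ)) (k * (s - ℓ) + ℓ)).image f = B ∧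
      ∀ j < k, HasEdge h ((Ico (j * (s - ℓ)) (j * (s - ℓ) + s)).image f) := by
  induction path with
  | nil hA =>
    obtain ⟨f, -, hf⟩ := exists_enum_extend (fun _ => (0 : Fin n)) 0 A
    rw [zero_add, hA, ← range_eq_Ico] at hf
    simp only [zero_mul, zero_add, ← range_eq_Ico]
    exact ⟨f, hf, hf, hf, fun j hj => absurd hj j.not_lt_zero⟩
  | @snoc k B C P W _ hP hC _ _ hedge ih =>
    obtain ⟨f, hW, hA, hB, hedges⟩ := ih
    set d := s - ℓ
    obtain ⟨f₁, hf₁, hP'⟩ := exists_enum_extend f (k * d + ℓ) P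
    obtain ⟨f₂, hf₂, hC'⟩ := exists_enum_extend f₁ (k * d + d) C
    rw [hP, show k * d + ℓ + (s - 2 * ℓ) = k * d + d by omega] at hP'
    rw [hC] at hC'
    have hf : ∀ I ⊆ range (k * d + ℓ), I.image f₂ = I.image f := fun I hI => by
      rw [hf₂ I (hI.trans (range_mono (by omega))), hf₁ I hI]
    have hB₂ : (Ico (k * d) (k * d + ℓ)).image f₂ = B := by
      rw [hf _ fun i hi => mem_range.2 (mem_Ico.1 hi).2, hB]
    have hP₂ : (Ico (k * d + ℓ) (k * d + d)).image f₂ = P := by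
      rw [hf₂ _ fun i hi => mem_range.2 (mem_Ico.1 hi).2, hP']
    rw [add_one_mul]
    refine ⟨f₂, ?_, ?_, hC', fun j hj => ?_⟩
    · rw [range_eq_Ico, ← Ico_union_Ico_eq_Ico zero_le (Nat.le_add_right (k * d + d) ℓ),
        ← Ico_union_Ico_eq_Ico zero_le (show k * d + ℓ ≤ k * d + d by omega),
        image_union, image_union, ← range_eq_Ico, hf _ subset_rfl, hW, hP₂, hC']
    · rw [hf _ (range_mono (Nat.le_add_left _ _)), hA]
    · obtain hj | rfl := Nat.lt_succ_iff_lt_or_eq.1 hj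
      · have := Nat.mul_le_mul_right d hj
        rw [Nat.succ_mul] at this
        rw [hf _ fun i hi => mem_range.2 (by rw [mem_Ico] at hi; omega)]
        exact hedges j hj
      · rwa [← Ico_union_Ico_eq_Ico (show j * d ≤ j * d + d by omega) (by omega),
          ← Ico_union_Ico_eq_Ico (Nat.le_add_right _ ℓ) (by omega), image_union, image_union,
          hB₂, hP₂, show j * d + s = j * d + d + ℓ by omega, hC']

lemma image_mod_eq {α : Type*} [DecidableEq α] (f : ℕ → α) {a b N : ℕ} (h : a + b ≤ N) :
    (range b).image (fun i => f ((a + i) % N)) = (Ico a (a + b)).image f := by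
  have hIco : Ico a (a + b) = (range b).image (a + ·) := by
    rw [range_eq_Ico, image_add_left_Ico, add_zero]
  rw [hIco, image_image]
  refine image_congr fun i hi => congrArg f (Nat.mod_eq_of_lt ?_)
  have := mem_range.1 hi
  omega

lemma image_cyclic_eq {α : Type*} [DecidableEq α] (f : ℕ → α) (k : ℕ) (hs : 2 * ℓ ≤ s) :
    (range s).image (fun i => f ((k * (s - ℓ) + i) % ((s - ℓ) * (k + 1)))) =
      (Ico (k * (s - ℓ)) (k * (s - ℓ) + (s - ℓ))).image f ∪ (range ℓ).image f := by
  set d := s - ℓ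
  have hmod₁ : ∀ i < d, (k * d + i) % (d * (k + 1)) = k * d + i := fun i hi =>
    Nat.mod_eq_of_lt (by linarith)
  have hmod₂ : ∀ i < ℓ, (k * d + (d + i)) % (d * (k + 1)) = i := fun i hi => by
    rw [show k * d + (d + i) = d * (k + 1) + i by ring, Nat.add_mod_left]
    exact Nat.mod_eq_of_lt ((by omega : i < d).trans_le (Nat.le_mul_of_pos_right d k.succ_pos))
  ext v
  simp only [mem_image, mem_union, mem_range, mem_Ico]
  constructor
  · rintro ⟨i, hi, rfl⟩
    by_cases hid : i < d
    · exact .inl ⟨k * d + i, by omega, by rw [hmod₁ i hid]⟩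
    · obtain ⟨i, rfl⟩ := Nat.exists_eq_add_of_le (not_lt.1 hid)
      exact .inr ⟨i, by omega, by rw [hmod₂ i (by omega)]⟩
  · rintro (⟨i, hi, rfl⟩ | ⟨i, hi, rfl⟩)
    · obtain ⟨i, rfl⟩ := Nat.exists_eq_add_of_le hi.1
      exact ⟨i, by omega, by rw [hmod₁ i (by omega)]⟩
    · exact ⟨d + i, by omega, by rw [hmod₂ i hi]⟩

lemma containsCopy_looseCycle_of_enum {m : ℕ} (hm : 0 < (s - ℓ) * m) {f : ℕ → Fin n}
    (hf : Set.InjOn f (range ((s - ℓ) * m)))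
    (hedge : ∀ j < m,
      HasEdge h ((range s).image fun i => f ((j * (s - ℓ) + i) % ((s - ℓ) * m)))) :
    ContainsCopy (looseCycle s ℓ m) h := by
  have : NeZero ((s - ℓ) * m) := ⟨hm.ne'⟩
  let φ : ZMod ((s - ℓ) * m) ↪ Fin n := ⟨fun z => f z.val, fun z z' hz => ZMod.val_injective _
    (hf (mem_coe.2 (mem_range.2 z.val_lt)) (mem_coe.2 (mem_range.2 z'.val_lt)) hz)⟩
  refine ⟨φ, fun e he => ?_⟩
  obtain ⟨j, hj, rfl⟩ := mem_image.1 he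
  obtain ⟨p, hp, hpF⟩ := hedge j (mem_range.1 hj)
  refine ⟨p, hp, ?_⟩
  rw [hpF, ← map_val, map_eq_image, image_image]
  exact congrArg Finset.val (image_congr fun i _ => congrArg f (ZMod.val_natCast _ _))

theorem LoosePath.containsCopy_looseCycle (hℓ : 1 ≤ ℓ) (hs : 2 * ℓ ≤ s)
    (path : LoosePath h ℓ A k B W) (hP : #P = s - 2 * ℓ) (hPW : Disjoint P W)
    (hedge : HasEdge h (B ∪ P ∪ A)) : ContainsCopy (looseCycle s ℓ (k + 1)) h := by
  obtain ⟨v, -⟩ := card_pos.1 (path.card_first ▸ hℓ : 0 < #A)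
  have : NeZero n := ⟨v.pos.ne'⟩
  obtain ⟨f, hW, hA, hB, hedges⟩ := path.exists_enum hs
  set d := s - ℓ with hd
  obtain ⟨g, hg, hgP⟩ := exists_enum_extend f (k * d + ℓ) P
  have hd_add : ℓ + (s - 2 * ℓ) = d := by omega
  rw [hP, add_assoc, hd_add] at hgP
  have hN : d * (k + 1) = k * d + d := by ring
  have hinj : Set.InjOn g (range (d * (k + 1))) := by
    refine injOn_of_card_image_eq ?_
    rw [hN, card_range, range_eq_Ico,
      ← Ico_union_Ico_eq_Ico zero_le (show k * d + ℓ ≤ k * d + d by omega), image_union,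
      ← range_eq_Ico, hg _ subset_rfl, hW, hgP, card_union_of_disjoint hPW.symm,
      path.card_vertices hs, hP, add_assoc, hd_add]
  refine containsCopy_looseCycle_of_enum (Nat.mul_pos (by omega) k.succ_pos) hinj fun j hj => ?_
  rw [← hd]
  obtain hj | rfl := Nat.lt_succ_iff_lt_or_eq.1 hj
  · have hjk := Nat.mul_le_mul_right d hj
    rw [Nat.succ_mul] at hjk
    rw [image_mod_eq g (by omega), hg _ fun i hi => mem_range.2 (by rw [mem_Ico] at hi; omega)]
    exact hedges j hj
  · rw [image_cyclic_eq g j hs, ← Ico_union_Ico_eq_Ico (Nat.le_add_right _ ℓ) (by omega),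
      image_union, hgP, hg _ (range_mono (Nat.le_add_left _ _)), hA,
      hg _ fun i hi => mem_range.2 (mem_Ico.1 hi).2, hB]
    exact hedge

end Paths

section Construction

variable {h h' : List (Step n r s)} {ℓ k N i₁ i₂ : ℕ}
  {A B B₁ B₂ P V V₁ V₂ W X X₁ X₂ Z : Finset (Fin n)}

lemma LoosePath.exists_snoc (hs : 2 * ℓ ≤ s) (hr : r + ℓ ≤ s) (path : LoosePath h ℓ A k B W)
    (hn : #W + s ≤ n) {U : Col n r} (hU : Disjoint U.1 W) :
    ∃ V C W', LoosePath ((U, V) :: h) ℓ A (k + 1) C W' := by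
  obtain ⟨X, hX, hXcard⟩ := exists_disjoint_card_eq (Z := W ∪ U.1) (c := s - ℓ - r)
    ((Nat.add_le_add_right (card_union_le _ _) _).trans (by rw [U.2]; omega))
  obtain ⟨hXW, hXU⟩ := disjoint_union_right.1 hX
  have hUX : #(U.1 ∪ X) = s - ℓ := by rw [card_union_of_disjoint hXU.symm, U.2, hXcard]; omega
  obtain ⟨C, hC, hCcard⟩ := exists_subset_card_eq (s := U.1 ∪ X) (n := ℓ) (by omega)
  have hUXW : Disjoint (U.1 ∪ X) W := disjoint_union_left.2 ⟨hU, hXW⟩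
  have hBX : #(B ∪ X) = s - r := by
    rw [card_union_of_disjoint (hXW.mono_right path.last_subset).symm, path.card_last, hXcard]
    omega
  refine ⟨⟨B ∪ X, hBX⟩, C, _, (path.mono (List.subset_cons_self _ _)).snoc
    (P := (U.1 ∪ X) \ C) ?_ hCcard (hUXW.mono_left sdiff_subset) ?_ (hasEdge_cons _ ?_ ?_)⟩
  · rw [card_sdiff_of_subset hC, hUX, hCcard]; omega
  · exact disjoint_union_right.2 ⟨hUXW.mono_left hC, disjoint_sdiff⟩
  · exact disjoint_union_right.2 ⟨hU.mono_right path.last_subset, hXU.symm⟩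
  · rw [union_assoc B, sdiff_union_of_subset hC, union_left_comm]

lemma LoosePath.exists_close (hℓ : 1 ≤ ℓ) (hs : 2 * ℓ ≤ s) (hr : r + 2 * ℓ ≤ s)
    (path : LoosePath h ℓ A (k + 1) B W) (hn : #W + s ≤ n) {U : Col n r} (hU : Disjoint U.1 W) :
    ∃ V, ContainsCopy (looseCycle s ℓ (k + 2)) ((U, V) :: h) := by
  obtain ⟨X, hX, hXcard⟩ := exists_disjoint_card_eq (Z := W ∪ U.1) (c := s - 2 * ℓ - r)
    ((Nat.add_le_add_right (card_union_le _ _) _).trans (by rw [U.2]; omega))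
  obtain ⟨hXW, hXU⟩ := disjoint_union_right.1 hX
  have hBA : B ∪ A ⊆ W := union_subset path.last_subset path.first_subset
  have hBAX : #(B ∪ A ∪ X) = s - r := by
    rw [card_union_of_disjoint (hXW.mono_right hBA).symm,
      card_union_of_disjoint path.disjoint_first_last.symm, path.card_last, path.card_first, hXcard]
    omega
  refine ⟨⟨B ∪ A ∪ X, hBAX⟩, (path.mono (List.subset_cons_self _ _)).containsCopy_looseCycle hℓ hs
    (P := U.1 ∪ X) ?_ (disjoint_union_left.2 ⟨hU, hXW⟩) (hasEdge_cons _ ?_ ?_)⟩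
  · rw [card_union_of_disjoint hXU.symm, U.2, hXcard]; omega
  · exact disjoint_union_right.2 ⟨hU.mono_right hBA, hXU.symm⟩
  · ext v; simp only [mem_union]; tauto

/-- Every vertex of `X` lies in an `r`-subset of `X` which together with `V` forms an edge. -/
def IsFan (h : List (Step n r s)) (V X : Finset (Fin n)) : Prop :=
  ∀ x ∈ X, ∃ u ⊆ X, x ∈ u ∧ #u = r ∧ HasEdge h (V ∪ u)

lemma IsFan.mono (hh : h ⊆ h') (fan : IsFan h V X) : IsFan h' V X := fun x hx =>
  let ⟨u, huX, hxu, hu, hedge⟩ := fan x hx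
  ⟨u, huX, hxu, hu, hedge.mono hh⟩

lemma IsFan.union_cons (fan : IsFan h V X) {U : Col n r} (hV : #V = s - r) (hU : Disjoint U.1 V) :
    IsFan ((U, ⟨V, hV⟩) :: h) V (X ∪ U.1) := fun x hx => by
  rcases mem_union.1 hx with hx | hx
  · obtain ⟨u, huX, hu⟩ := fan.mono (List.subset_cons_self _ _) x hx
    exact ⟨u, huX.trans subset_union_left, hu⟩
  · exact ⟨U.1, subset_union_right, hx, U.2, hasEdge_cons _ hU (union_comm _ _)⟩

lemma IsFan.exists_pair (fan : IsFan h V X) (hr : 2 ≤ r) {x : Fin n} (hx : x ∈ X) :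
    ∃ D ⊆ X, ∃ P ⊆ X, Disjoint D P ∧ x ∈ D ∧ #D = 2 ∧ #P = r - 2 ∧ HasEdge h (V ∪ (D ∪ P)) := by
  obtain ⟨u, huX, hxu, hu, hedge⟩ := fan x hx
  obtain ⟨D, hxD, hDu, hD⟩ := exists_subsuperset_card_eq (singleton_subset_iff.2 hxu)
    (by rw [card_singleton]; omega) (hr.trans hu.ge)
  refine ⟨D, hDu.trans huX, u \ D, sdiff_subset.trans huX, disjoint_sdiff,
    singleton_subset_iff.1 hxD, hD, ?_, ?_⟩
  · rw [card_sdiff_of_subset hDu, hu, hD]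
  · rwa [union_sdiff_of_subset hDu]

/-- Two disjoint fans, with kernels `V₁` and `V₂`, consisting of `i₁` and `i₂` edges and avoiding
the set `Z` outside of their kernels. -/
def TwoFans (h : List (Step n r s)) (Z V₁ V₂ : Finset (Fin n)) (i₁ i₂ : ℕ) : Prop :=
  ∃ X₁ X₂, #X₁ = r * i₁ ∧ #X₂ = r * i₂ ∧ Disjoint X₁ Z ∧ Disjoint X₂ Z ∧ Disjoint X₁ X₂ ∧
    IsFan h V₁ X₁ ∧ IsFan h V₂ X₂

namespace TwoFans

lemma zero (h : List (Step n r s)) (Z V₁ V₂ : Finset (Fin n)) : TwoFans h Z V₁ V₂ 0 0 :=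
  ⟨∅, ∅, card_empty, card_empty, disjoint_empty_left _, disjoint_empty_left _,
    disjoint_empty_left _, fun _ hx => absurd hx (notMem_empty _),
    fun _ hx => absurd hx (notMem_empty _)⟩

lemma symm (fans : TwoFans h Z V₁ V₂ i₁ i₂) : TwoFans h Z V₂ V₁ i₂ i₁ :=
  let ⟨X₁, X₂, hX₁, hX₂, hZ₁, hZ₂, hX, fan₁, fan₂⟩ := fans
  ⟨X₂, X₁, hX₂, hX₁, hZ₂, hZ₁, hX.symm, fan₂, fan₁⟩

lemma exists_succ (fans : TwoFans h Z V₁ V₂ i₁ i₂) (hV₁ : #V₁ = s - r) (hVZ : V₁ ⊆ Z) :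
    ∃ Y : Finset (Fin n), #Y ≤ #Z + r * i₁ + r * i₂ ∧
      ∀ U : Col n r, Disjoint U.1 Y → TwoFans ((U, ⟨V₁, hV₁⟩) :: h) Z V₁ V₂ (i₁ + 1) i₂ := by
  obtain ⟨X₁, X₂, hX₁, hX₂, hZ₁, hZ₂, hX, fan₁, fan₂⟩ := fans
  refine ⟨Z ∪ X₁ ∪ X₂, ?_, fun U hU => ?_⟩
  · rw [← hX₁, ← hX₂]
    exact (card_union_le _ _).trans (Nat.add_le_add_right (card_union_le _ _) _)
  · simp only [disjoint_union_right] at hU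
    obtain ⟨⟨hUZ, hUX₁⟩, hUX₂⟩ := hU
    refine ⟨X₁ ∪ U.1, X₂, ?_, hX₂, disjoint_union_left.2 ⟨hZ₁, hUZ⟩, hZ₂,
      disjoint_union_left.2 ⟨hX, hUX₂⟩, fan₁.union_cons hV₁ (hUZ.mono_right hVZ),
      fan₂.mono (List.subset_cons_self _ _)⟩
    rw [card_union_of_disjoint hUX₁.symm, hX₁, U.2, mul_add_one]

end TwoFans

/-- A loose path with `k` edges together with two disjoint sets `B₁` and `B₂` of `ℓ - 2` further
vertices. The kernels of the fans are `A ∪ B₁` and `B ∪ B₂`. -/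
structure PaddedPath (h : List (Step n r s)) (ℓ k : ℕ) (A B W B₁ B₂ : Finset (Fin n)) : Prop where
  path : LoosePath h ℓ A k B W
  card_left : #B₁ = ℓ - 2
  card_right : #B₂ = ℓ - 2
  left_disjoint : Disjoint B₁ W
  right_disjoint : Disjoint B₂ W
  left_disjoint_right : Disjoint B₁ B₂

lemma LoosePath.exists_paddedPath (hs : 2 * ℓ ≤ s) (path : LoosePath h ℓ A k B W)
    (hn : k * (s - ℓ) + 3 * ℓ ≤ n) : ∃ B₁ B₂, PaddedPath h ℓ k A B W B₁ B₂ := by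
  have hW := path.card_vertices hs
  obtain ⟨B₁, hB₁, hB₁card⟩ := exists_disjoint_card_eq (Z := W) (c := ℓ - 2) (by omega)
  obtain ⟨B₂, hB₂, hB₂card⟩ := exists_disjoint_card_eq (Z := W ∪ B₁) (c := ℓ - 2)
    (by rw [card_union_of_disjoint hB₁.symm]; omega)
  obtain ⟨hB₂W, hB₂₁⟩ := disjoint_union_right.1 hB₂
  exact ⟨B₁, B₂, path, hB₁card, hB₂card, hB₁, hB₂W, hB₂₁.symm⟩

namespace PaddedPath

lemma card_left_kernel (pp : PaddedPath h ℓ k A B W B₁ B₂) : #(A ∪ B₁) = ℓ + (ℓ - 2) := by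
  rw [card_union_of_disjoint (pp.left_disjoint.mono_right pp.path.first_subset).symm,
    pp.path.card_first, pp.card_left]

lemma card_right_kernel (pp : PaddedPath h ℓ k A B W B₁ B₂) : #(B ∪ B₂) = ℓ + (ℓ - 2) := by
  rw [card_union_of_disjoint (pp.right_disjoint.mono_right pp.path.last_subset).symm,
    pp.path.card_last, pp.card_right]

lemma card_vertices (hs : 2 * ℓ ≤ s) (pp : PaddedPath h ℓ k A B W B₁ B₂) :
    #(W ∪ B₁ ∪ B₂) = k * (s - ℓ) + ℓ + (ℓ - 2) + (ℓ - 2) := by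
  rw [card_union_of_disjoint
      (disjoint_union_left.2 ⟨pp.right_disjoint.symm, pp.left_disjoint_right⟩),
    card_union_of_disjoint pp.left_disjoint.symm, pp.path.card_vertices hs, pp.card_left,
    pp.card_right]

lemma left_kernel_subset (pp : PaddedPath h ℓ k A B W B₁ B₂) : A ∪ B₁ ⊆ W ∪ B₁ ∪ B₂ :=
  (union_subset_union_left pp.path.first_subset).trans subset_union_left

lemma right_kernel_subset (pp : PaddedPath h ℓ k A B W B₁ B₂) : B ∪ B₂ ⊆ W ∪ B₁ ∪ B₂ :=
  union_subset_union_left (pp.path.last_subset.trans subset_union_left)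

end PaddedPath

lemma exists_linking_reply {D₁ D₂ : Finset (Fin n)} (hr : r + 2 * ℓ = s + 2) (hℓ : 2 ≤ ℓ)
    (hB₁ : #B₁ = ℓ - 2) (hB₂ : #B₂ = ℓ - 2) (hD₁ : #D₁ = 2) (hD₂ : #D₂ = 2)
    (hB : Disjoint B₁ B₂) (hD : Disjoint D₁ D₂) (hBD : Disjoint (B₁ ∪ B₂) (D₁ ∪ D₂))
    {U : Col n r} {x₁ x₂ : Fin n} (hx₁ : x₁ ∈ D₁) (hx₂ : x₂ ∈ D₂)
    (hU : U.1 ∩ (B₁ ∪ B₂ ∪ (D₁ ∪ D₂)) = {x₁, x₂}) :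
    ∃ V, HasEdge ((U, V) :: h) (B₂ ∪ D₂ ∪ U.1 \ {x₁, x₂} ∪ (B₁ ∪ D₁)) := by
  have hxU : {x₁, x₂} ⊆ U.1 := hU ▸ inter_subset_left
  set V := B₁ ∪ B₂ ∪ (D₁.erase x₁ ∪ D₂.erase x₂) with hVdef
  have hV : #V = s - r := by
    rw [hVdef, card_union_of_disjoint (hBD.mono_right (union_subset_union (erase_subset _ _)
      (erase_subset _ _))), card_union_of_disjoint hB, card_union_of_disjoint (hD.mono
      (erase_subset _ _) (erase_subset _ _)), card_erase_of_mem hx₁, card_erase_of_mem hx₂]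
    omega
  refine ⟨⟨V, hV⟩, hasEdge_cons h (by rw [Finset.disjoint_left] at *; grind) ?_⟩
  ext v
  have : v = x₁ ∨ v = x₂ → v ∈ U.1 := fun hv => hxU (by rwa [mem_insert, mem_singleton])
  grind

lemma PaddedPath.exists_containsCopy (hℓ : 2 ≤ ℓ) (hr : r + 2 * ℓ = s + 2) (hr₂ : 2 ≤ r)
    (pp : PaddedPath h ℓ k A B W B₁ B₂) (hX₁ : Disjoint X₁ (W ∪ B₁ ∪ B₂))
    (hX₂ : Disjoint X₂ (W ∪ B₁ ∪ B₂)) (hX : Disjoint X₁ X₂) (fan₁ : IsFan h (A ∪ B₁) X₁)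
    (fan₂ : IsFan h (B ∪ B₂) X₂) {U : Col n r} {x₁ x₂ : Fin n} (hx₁ : x₁ ∈ X₁) (hx₂ : x₂ ∈ X₂)
    (hU : U.1 ∩ (W ∪ B₁ ∪ B₂ ∪ X₁ ∪ X₂) = {x₁, x₂}) :
    ∃ V, ContainsCopy (looseCycle s ℓ (k + 3)) ((U, V) :: h) := by
  obtain ⟨D₁, hDX₁, P₁, hPX₁, hDP₁, hxD₁, hD₁, hP₁, hedge₁⟩ := fan₁.exists_pair hr₂ hx₁
  obtain ⟨D₂, hDX₂, P₂, hPX₂, hDP₂, hxD₂, hD₂, hP₂, hedge₂⟩ := fan₂.exists_pair hr₂ hx₂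
  obtain ⟨path, hB₁, hB₂, hB₁W, hB₂W, hB₁₂⟩ := pp
  have hrs : r - 2 = s - 2 * ℓ := by omega
  have hxU : {x₁, x₂} ⊆ U.1 := hU ▸ inter_subset_left
  have hA := path.first_subset
  have hB := path.last_subset
  have hR : #(U.1 \ {x₁, x₂}) = s - 2 * ℓ := by
    rw [card_sdiff_of_subset hxU, U.2, card_pair, hrs]
    exact fun hx => Finset.disjoint_left.1 hX hx₁ (hx ▸ hx₂)
  have hBD : Disjoint (B₁ ∪ B₂) (D₁ ∪ D₂) := by rw [Finset.disjoint_left] at *; grind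
  have hJ₁ : #(B₁ ∪ D₁) = ℓ := by
    rw [card_union_of_disjoint (hBD.mono subset_union_left subset_union_left)]
    omega
  have hJ₂ : #(B₂ ∪ D₂) = ℓ := by
    rw [card_union_of_disjoint (hBD.mono subset_union_right subset_union_right)]
    omega
  have hUD : U.1 ∩ (B₁ ∪ B₂ ∪ (D₁ ∪ D₂)) = {x₁, x₂} := by
    refine subset_antisymm (hU ▸ inter_subset_inter_left ?_) (subset_inter hxU ?_) <;> grind
  obtain ⟨V, hedge⟩ := exists_linking_reply (h := h) hr hℓ hB₁ hB₂ hD₁ hD₂ hB₁₂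
    (hX.mono hDX₁ hDX₂) hBD hxD₁ hxD₂ hUD
  have hmono : h ⊆ (U, V) :: h := List.subset_cons_self _ _
  refine ⟨V, (((path.mono hmono).snoc (P := P₂) (hP₂.trans hrs) hJ₂ ?_ ?_ ?_).snoc hR hJ₁
    ?_ ?_ hedge).containsCopy_looseCycle (by omega) (by omega) (P := P₁) (hP₁.trans hrs) ?_ ?_⟩
  case refine_3 => convert hedge₂.mono hmono using 1; ac_rfl
  case refine_7 => convert hedge₁.mono hmono using 1; ac_rfl
  all_goals rw [Finset.disjoint_left] at *; grind

end Construction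

section Values

variable [Nonempty (Col n r)] [Nonempty (Col n (s - r))] {h : List (Step n r s)}
  {ℓ k i₂ M N T : ℕ} {A B B₁ B₂ V₁ V₂ W Z : Finset (Fin n)} {ε : ℝ≥0∞}

lemma uniformCol_le_of_forall_disjoint {p : Col n r → Prop} (hn : n ≠ 0)
    (hZ : ∀ U : Col n r, Disjoint U.1 Z → p U) (hM : #Z ≤ M) :
    (uniformCol n r).toOuterMeasure {U | ¬p U} ≤ M * (r / n) :=
  calc (uniformCol n r).toOuterMeasure {U | ¬p U}
      ≤ (uniformCol n r).toOuterMeasure {U | ¬Disjoint U.1 Z} :=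
        MeasureTheory.measure_mono fun U hU hUZ => hU (hZ U hUZ)
    _ ≤ #Z * (r / n) := uniformCol_not_disjoint_le hn Z
    _ ≤ M * (r / n) := by gcongr

section Persistent

variable {Q : List (Step n r s) → Prop} (hQ : ∀ ⦃h h'⦄, h ⊆ h' → Q h → Q h')
include hQ

lemma one_le_optimalValue_of_loosePath (hℓ : 1 ≤ ℓ) (hs : 2 * ℓ ≤ s) (hr : r + ℓ ≤ s)
    (hM : k * (s - ℓ) + ℓ ≤ M) (hn : M + s ≤ n) (L : ℕ)
    (hend : ∀ h A B W, LoosePath h ℓ A k B W → 1 ≤ optimalValue Q T h + ε) :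
    1 ≤ optimalValue Q (k * L + T) [] + (ε + k * (M * (r / n)) ^ L) := by
  refine one_le_optimalValue_of_levels hQ L (G := fun j h => ∃ A B W, LoosePath h ℓ A j B W)
    (fun h ⟨A, B, W, path⟩ => hend h A B W path) (fun j hj h ⟨A, B, W, path⟩ => ?_) ?_
  · have hW : #W ≤ M := by
      rw [path.card_vertices hs]
      exact (Nat.add_le_add_right (Nat.mul_le_mul_right _ hj.le) _).trans hM
    refine uniformCol_le_of_forall_disjoint (by omega) (fun U hU => ?_) hW
    obtain ⟨V, C, W', path'⟩ := path.exists_snoc hs hr (by omega) hU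
    exact ⟨V, A, C, W', path'⟩
  · obtain ⟨A, -, hA⟩ := exists_disjoint_card_eq (Z := (∅ : Finset (Fin n))) (c := ℓ)
      (by rw [card_empty]; omega)
    exact ⟨A, A, A, .nil hA⟩

lemma one_le_optimalValue_of_fan (hn : n ≠ 0) (hV₁ : #V₁ = s - r) (hVZ : V₁ ⊆ Z)
    (hM : #Z + r * N + r * i₂ ≤ M) (L : ℕ) (fans : TwoFans h Z V₁ V₂ 0 i₂)
    (hend : ∀ h', h ⊆ h' → TwoFans h' Z V₁ V₂ N i₂ → 1 ≤ optimalValue Q T h' + ε) :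
    1 ≤ optimalValue Q (N * L + T) h + (ε + N * (M * (r / n)) ^ L) := by
  refine one_le_optimalValue_of_levels hQ L (G := fun i h' => h ⊆ h' ∧ TwoFans h' Z V₁ V₂ i i₂)
    (fun h' hh' => hend h' hh'.1 hh'.2) (fun i hi h' ⟨hh', fans'⟩ => ?_) ⟨List.Subset.refl h, fans⟩
  obtain ⟨Y, hYcard, hY⟩ := fans'.exists_succ hV₁ hVZ
  have := Nat.mul_le_mul_left r hi.le
  exact uniformCol_le_of_forall_disjoint hn
    (fun U hU => ⟨⟨V₁, hV₁⟩, List.Subset.trans hh' (List.subset_cons_self _ _), hY U hU⟩)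
    (by omega)

end Persistent

lemma one_le_optimalValue_looseCycle_of_add_two_mul_le (hℓ : 1 ≤ ℓ) (hs : 2 * ℓ ≤ s)
    (hr : r + 2 * ℓ ≤ s) (hM : (k + 1) * (s - ℓ) + ℓ ≤ M) (hn : M + s ≤ n) :
    1 ≤ optimalValue (ContainsCopy (looseCycle s ℓ (k + 2))) (k + 2) ([] : List (Step n r s)) +
      (k + 2 : ℕ) * (M * (r / n)) := by
  have hend : ∀ (h : List (Step n r s)) A B W, LoosePath h ℓ A (k + 1) B W →
      1 ≤ optimalValue (ContainsCopy (looseCycle s ℓ (k + 2))) 1 h + (0 + (M * (r / n)) ^ 1) := by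
    intro h A B W path
    have hW : #W ≤ M := (path.card_vertices hs).trans_le hM
    refine one_le_optimalValue_of_retry (fun _ _ => ContainsCopy.mono) (T := 0) ?_ 1
    refine uniformCol_le_of_forall_disjoint (by omega) (fun U hU => ?_) hW
    obtain ⟨V, hV⟩ := path.exists_close hℓ hs hr (by omega) hU
    exact ⟨V, (one_le_optimalValue_zero hV).trans le_self_add⟩
  refine (one_le_optimalValue_of_loosePath (fun _ _ => ContainsCopy.mono) hℓ hs (by omega) hM hn 1
    hend).trans_eq ?_
  rw [mul_one, pow_one]
  push_cast
  ring_nf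

lemma PaddedPath.one_le_optimalValue_of_twoFans (hℓ : 2 ≤ ℓ) (hr : r + 2 * ℓ = s + 2) (hr₂ : 2 ≤ r)
    (pp : PaddedPath h ℓ k A B W B₁ B₂)
    (fans : TwoFans h (W ∪ B₁ ∪ B₂) (A ∪ B₁) (B ∪ B₂) N N)
    (hn : 2 * (#(W ∪ B₁ ∪ B₂) + r * N + r * N + r) ≤ n) (L : ℕ) :
    1 ≤ optimalValue (ContainsCopy (looseCycle s ℓ (k + 3))) L h +
      (1 - (r * N) * (r * N) / (2 ^ (r - 2) * n ^ 2)) ^ L := by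
  obtain ⟨X₁, X₂, hX₁, hX₂, hZ₁, hZ₂, hX, fan₁, fan₂⟩ := fans
  have hZ : #(W ∪ B₁ ∪ B₂ ∪ X₁ ∪ X₂) = #(W ∪ B₁ ∪ B₂) + r * N + r * N := by
    rw [card_union_of_disjoint (disjoint_union_left.2 ⟨hZ₂.symm, hX⟩),
      card_union_of_disjoint hZ₁.symm, hX₁, hX₂]
  have hhit := uniformCol_not_double_hit_le (n := n) hr₂
    (subset_union_right.trans subset_union_left : X₁ ⊆ W ∪ B₁ ∪ B₂ ∪ X₁ ∪ X₂)
    (subset_union_right : X₂ ⊆ _) hX (by rwa [hZ])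
  rw [hX₁, hX₂, Nat.cast_mul] at hhit
  have hfail : (uniformCol n r).toOuterMeasure {U | ¬∃ V, 1 ≤ optimalValue
      (ContainsCopy (looseCycle s ℓ (k + 3))) 0 ((U, V) :: h) + 0} ≤
      1 - (r * N) * (r * N) / (2 ^ (r - 2) * n ^ 2) := by
    refine hhit.trans' (MeasureTheory.measure_mono fun U hU hhitU => hU ?_)
    obtain ⟨x₁, hx₁, x₂, hx₂, hUZ⟩ := hhitU
    obtain ⟨V, hV⟩ := pp.exists_containsCopy hℓ hr hr₂ hZ₁ hZ₂ hX fan₁ fan₂ hx₁ hx₂ hUZ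
    exact ⟨V, (one_le_optimalValue_zero hV).trans le_self_add⟩
  simpa only [add_zero, zero_add] using
    one_le_optimalValue_of_retry (fun _ _ => ContainsCopy.mono) hfail L

lemma PaddedPath.one_le_optimalValue (hℓ : 2 ≤ ℓ) (hs : 2 * ℓ ≤ s) (hr : r + 2 * ℓ = s + 2)
    (pp : PaddedPath h ℓ k A B W B₁ B₂) (hM : #(W ∪ B₁ ∪ B₂) + r * N + r * N ≤ M)
    (hn : 2 * (M + s) ≤ n) (L : ℕ) :
    1 ≤ optimalValue (ContainsCopy (looseCycle s ℓ (k + 3))) (N * 3 + (N * 3 + L)) h +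
      ((1 - (r * N) * (r * N) / (2 ^ (r - 2) * n ^ 2)) ^ L + N * (M * (r / n)) ^ 3 +
        N * (M * (r / n)) ^ 3) := by
  have hQ : ∀ ⦃h h' : List (Step n r s)⦄, h ⊆ h' → ContainsCopy (looseCycle s ℓ (k + 3)) h →
    ContainsCopy (looseCycle s ℓ (k + 3)) h' := fun _ _ => ContainsCopy.mono
  have hV₁ : #(A ∪ B₁) = s - r := by rw [pp.card_left_kernel]; omega
  have hV₂ : #(B ∪ B₂) = s - r := by rw [pp.card_right_kernel]; omega
  refine one_le_optimalValue_of_fan hQ (by omega) hV₁ pp.left_kernel_subset (i₂ := 0) (by omega) 3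
    (.zero h _ _ (B ∪ B₂)) fun h' hh' fans => ?_
  refine one_le_optimalValue_of_fan hQ (by omega) hV₂ pp.right_kernel_subset (by omega) 3
    fans.symm fun h'' hh'' fans => ?_
  exact { pp with path := pp.path.mono (List.Subset.trans hh' hh'') }.one_le_optimalValue_of_twoFans
    hℓ hr (by omega) fans.symm (by omega) L

lemma one_le_optimalValue_looseCycle_of_add_two_mul_eq (hℓ : 2 ≤ ℓ) (hs : 2 * ℓ ≤ s)
    (hr : r + 2 * ℓ = s + 2) (hM : k * (s - ℓ) + 3 * ℓ + 2 * (r * N) ≤ M) (hn : 2 * (M + s) ≤ n)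
    (L : ℕ) :
    1 ≤ optimalValue (ContainsCopy (looseCycle s ℓ (k + 3)))
        (k * 3 + (N * 3 + (N * 3 + L))) ([] : List (Step n r s)) +
      ((1 - (r * N) * (r * N) / (2 ^ (r - 2) * n ^ 2)) ^ L + (k + 2 * N) * (M * (r / n)) ^ 3) := by
  have hend : ∀ (h : List (Step n r s)) A B W, LoosePath h ℓ A k B W →
      1 ≤ optimalValue (ContainsCopy (looseCycle s ℓ (k + 3))) (N * 3 + (N * 3 + L)) h +
        ((1 - (r * N) * (r * N) / (2 ^ (r - 2) * n ^ 2)) ^ L + N * (M * (r / n)) ^ 3 +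
          N * (M * (r / n)) ^ 3) := by
    intro h A B W path
    obtain ⟨B₁, B₂, pp⟩ := path.exists_paddedPath hs (by omega)
    have hZ := pp.card_vertices hs
    exact pp.one_le_optimalValue hℓ hs hr (by omega) hn L
  refine (one_le_optimalValue_of_loosePath (fun _ _ => ContainsCopy.mono) (by omega) hs (by omega)
    (by omega : _ ≤ M) (by omega) 3 hend).trans_eq ?_
  ring

end Values

section UpperBound

lemma tauExp_le_of_one_le_optimalValue {V : Type*} {E : Finset (Finset V)} {α : ℝ} (hα : 0 ≤ α)
    (hrs : r ≤ s)
    (h : ∀ ε : ℝ, 0 < ε → ∃ C : ℝ, 1 ≤ C ∧ ∀ᶠ n : ℕ in atTop, ∃ t : ℕ, t ≤ C * (n : ℝ) ^ α ∧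
      ∀ [Nonempty (Col n r)] [Nonempty (Col n (s - r))],
        1 ≤ optimalValue (ContainsCopy E) t ([] : List (Step n r s)) + ENNReal.ofReal ε) :
    tauExp r s E ≤ α := by
  refine tauExp_le hα fun q hq => ?_
  have hq' : 1 - q ≠ ∞ := by finiteness
  obtain ⟨C, hC, hbound⟩ := h (1 - q).toReal (ENNReal.toReal_pos (tsub_pos_of_lt hq).ne' hq')
  refine ⟨C, hC, ?_⟩
  filter_upwards [hbound, eventually_ge_atTop s] with n ⟨t, ht, hvalue⟩ hn
  have := col_nonempty (hrs.trans hn)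
  have := col_nonempty ((s.sub_le r).trans hn)
  obtain ⟨S, hS⟩ := exists_strategy_optimalValue_le (ContainsCopy E : List (Step n r s) → Prop) t
  refine ⟨S, t, ht, ?_⟩
  have hq_le : q + (1 - q) ≤
      optimalValue (ContainsCopy E) t ([] : List (Step n r s)) + (1 - q) := by
    rw [add_tsub_cancel_of_le hq.le, ← ENNReal.ofReal_toReal hq']
    exact hvalue
  rw [probContains, dif_pos (hrs.trans hn)]
  exact ((ENNReal.add_le_add_iff_right hq').1 hq_le).trans hS

lemma tauExp_looseCycle_le_zero {ℓ k : ℕ} (hℓ : 1 ≤ ℓ) (hs : 2 * ℓ ≤ s) (hr : r + 2 * ℓ ≤ s) :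
    tauExp r s (looseCycle s ℓ (k + 2)) ≤ 0 := by
  refine tauExp_le_of_one_le_optimalValue le_rfl (by omega) fun ε hε =>
    ⟨(k + 2 : ℕ), Nat.one_le_cast.2 (by omega), ?_⟩
  set M := (k + 1) * (s - ℓ) + ℓ with hM
  have hlim : Tendsto (fun n : ℕ => ((k + 2 : ℕ) * (M * r) : ℝ) / n) atTop (nhds 0) :=
    tendsto_const_div_atTop_nhds_zero_nat _
  filter_upwards [hlim.eventually_le_const hε, eventually_ge_atTop (M + s), eventually_ne_atTop 0]
    with n herror hn hn0
  refine ⟨k + 2, by simp, fun {_ _} => ?_⟩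
  refine (one_le_optimalValue_looseCycle_of_add_two_mul_le hℓ hs hr hM.ge hn).trans ?_
  gcongr
  refine (ENNReal.le_ofReal_iff_toReal_le (by finiteness) hε.le).2 (herror.trans' (le_of_eq ?_))
  simp only [ENNReal.toReal_mul, ENNReal.toReal_div, ENNReal.toReal_natCast, mul_div_assoc]

/-- The number of edges in each of the two fans grown at the ends of a path when `r = s - 2ℓ + 2`;
with `n ^ (2 / 3)` of them, a random `r`-set meets both fans with probability of order
`n ^ (-2 / 3)`. -/
noncomputable def fanSize (n : ℕ) : ℕ := ⌈(n : ℝ) ^ (2 / 3 : ℝ)⌉₊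

lemma sq_le_fanSize_pow_three (n : ℕ) : n ^ 2 ≤ fanSize n ^ 3 := by
  have hle : (n : ℝ) ^ (2 / 3 : ℝ) ≤ fanSize n := Nat.le_ceil _
  have hpow : ((n : ℝ) ^ (2 / 3 : ℝ)) ^ 3 = (n : ℝ) ^ 2 := by
    rw [← Real.rpow_mul_natCast n.cast_nonneg, ← Real.rpow_natCast]
    norm_num
  exact_mod_cast hpow ▸ pow_le_pow_left₀ (by positivity) hle 3

lemma fanSize_pos (hn : n ≠ 0) : 0 < fanSize n :=
  Nat.ceil_pos.2 (by positivity)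

lemma fanSize_le (hn : n ≠ 0) : (fanSize n : ℝ) ≤ 2 * (n : ℝ) ^ (2 / 3 : ℝ) := by
  have hone : 1 ≤ (n : ℝ) ^ (2 / 3 : ℝ) :=
    Real.one_le_rpow (Nat.one_le_cast.2 (Nat.one_le_iff_ne_zero.2 hn)) (by norm_num)
  have := Nat.ceil_lt_add_one (zero_le_one.trans hone)
  unfold fanSize
  linarith

lemma tendsto_fanSize_pow_div_pow {a b : ℕ} (hab : 2 * a < 3 * b) :
    Tendsto (fun n : ℕ => (fanSize n : ℝ) ^ a / (n : ℝ) ^ b) atTop (nhds 0) := by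
  have hexp : (0 : ℝ) < b - 2 / 3 * a := by
    have : (2 * a : ℝ) < 3 * b := by exact_mod_cast hab
    linarith
  have hlim : Tendsto (fun n : ℕ => 2 ^ a * (n : ℝ) ^ (-(b - 2 / 3 * a : ℝ))) atTop (nhds 0) := by
    simpa using ((tendsto_rpow_neg_atTop hexp).comp tendsto_natCast_atTop_atTop).const_mul (2 ^ a)
  refine squeeze_zero' (.of_forall fun n => by positivity) ?_ hlim
  filter_upwards [eventually_ne_atTop 0] with n hn
  have hn' : (0 : ℝ) < n := by positivity
  rw [div_le_iff₀ (by positivity), mul_assoc, ← Real.rpow_natCast (n : ℝ) b,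
    ← Real.rpow_add hn', neg_sub, sub_add_cancel, Real.rpow_mul_natCast hn'.le, ← mul_pow]
  gcongr
  exact fanSize_le hn

lemma eventually_mul_fanSize_add_le (a b : ℕ) : ∀ᶠ n : ℕ in atTop, a * fanSize n + b ≤ n := by
  have hlim : Tendsto (fun n : ℕ => (a + b : ℝ) * ((fanSize n : ℝ) ^ 1 / (n : ℝ) ^ 1)) atTop
      (nhds 0) := by
    simpa using (tendsto_fanSize_pow_div_pow (a := 1) (b := 1) (by norm_num)).const_mul (a + b : ℝ)
  filter_upwards [hlim.eventually_le_const one_pos, eventually_ne_atTop 0] with n hle hn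
  have hn' : (0 : ℝ) < n := by positivity
  rw [pow_one, pow_one, ← mul_div_assoc, div_le_one hn'] at hle
  calc a * fanSize n + b ≤ (a + b) * fanSize n := by nlinarith [fanSize_pos hn]
    _ ≤ n := by exact_mod_cast hle

lemma one_sub_ofReal_pow_le {x : ℝ} (hx : 0 ≤ x) (L : ℕ) :
    (1 - ENNReal.ofReal x) ^ L ≤ ENNReal.ofReal (Real.exp (-(L * x))) :=
  calc (1 - ENNReal.ofReal x) ^ L = ENNReal.ofReal (1 - x) ^ L := by
        rw [ENNReal.ofReal_sub 1 hx, ENNReal.ofReal_one]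
    _ ≤ ENNReal.ofReal (Real.exp (-x)) ^ L := by gcongr; exact Real.one_sub_le_exp_neg x
    _ = ENNReal.ofReal (Real.exp (-(L * x))) := by
        rw [← ENNReal.ofReal_pow (Real.exp_nonneg _), ← Real.exp_nat_mul, mul_neg]

lemma exists_one_sub_pow_fanSize_le (hr : r ≠ 0) {ε : ℝ} (hε : 0 < ε) :
    ∃ K : ℕ, ∀ n : ℕ, n ≠ 0 →
      (1 - (r * fanSize n) * (r * fanSize n) / (2 ^ (r - 2) * n ^ 2) : ℝ≥0∞) ^ (K * fanSize n) ≤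
        ENNReal.ofReal ε := by
  set c : ℝ := r ^ 2 / 2 ^ (r - 2)
  have hc : 0 < c := by positivity
  have hlim : Tendsto (fun K : ℕ => Real.exp (-(K * c))) atTop (nhds 0) :=
    Real.tendsto_exp_neg_atTop_nhds_zero.comp (tendsto_natCast_atTop_atTop.atTop_mul_const hc)
  obtain ⟨K, hK⟩ := (hlim.eventually_le_const hε).exists
  refine ⟨K, fun n hn => ?_⟩
  have hN : (0 : ℝ) < fanSize n := Nat.cast_pos.2 (fanSize_pos hn)
  have hhit : ENNReal.ofReal (c / fanSize n) ≤
      (r * fanSize n) * (r * fanSize n) / (2 ^ (r - 2) * n ^ 2) := by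
    refine ENNReal.ofReal_le_of_le_toReal ?_
    have hsq : (n : ℝ) ^ 2 ≤ fanSize n ^ 3 := by exact_mod_cast sq_le_fanSize_pow_three n
    have : (0 : ℝ) < n := Nat.cast_pos.2 hn.bot_lt
    simp only [ENNReal.toReal_div, ENNReal.toReal_mul, ENNReal.toReal_pow, ENNReal.toReal_natCast,
      ENNReal.toReal_ofNat, c]
    rw [div_div, div_le_div_iff₀ (by positivity) (by positivity)]
    calc (r ^ 2 * (2 ^ (r - 2) * n ^ 2) : ℝ) ≤ r ^ 2 * (2 ^ (r - 2) * fanSize n ^ 3) := by gcongr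
      _ = r * fanSize n * (r * fanSize n) * (2 ^ (r - 2) * fanSize n) := by ring
  refine (pow_le_pow_left' (tsub_le_tsub_left hhit 1) _).trans
    ((one_sub_ofReal_pow_le (by positivity) _).trans (ENNReal.ofReal_le_ofReal ?_))
  rwa [Nat.cast_mul, mul_assoc, mul_div_cancel₀ _ hN.ne']

lemma eventually_fan_error_le (k b : ℕ) {ε : ℝ} (hε : 0 < ε) :
    ∀ᶠ n : ℕ in atTop, ((k + 2 * fanSize n) * ((b * fanSize n : ℕ) * (r / n)) ^ 3 : ℝ≥0∞) ≤
      ENNReal.ofReal ε := by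
  have hlim : Tendsto (fun n : ℕ => ((k + 2) * (b * r) ^ 3 : ℝ) * ((fanSize n : ℝ) ^ 4 / n ^ 3))
      atTop (nhds 0) := by
    simpa using (tendsto_fanSize_pow_div_pow (a := 4) (b := 3) (by norm_num)).const_mul
      ((k + 2) * (b * r) ^ 3 : ℝ)
  filter_upwards [hlim.eventually_le_const hε, eventually_ne_atTop 0] with n herror hn
  have hN : (1 : ℝ) ≤ fanSize n := Nat.one_le_cast.2 (fanSize_pos hn)
  refine (ENNReal.le_ofReal_iff_toReal_le (by finiteness) hε.le).2 (herror.trans' ?_)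
  rw [ENNReal.toReal_mul, ENNReal.toReal_add (by finiteness) (by finiteness)]
  simp only [ENNReal.toReal_mul, ENNReal.toReal_pow, ENNReal.toReal_div, ENNReal.toReal_natCast,
    ENNReal.toReal_ofNat, Nat.cast_mul]
  calc ((k + 2 * fanSize n) * (b * fanSize n * (r / n)) ^ 3 : ℝ)
      ≤ (k * fanSize n + 2 * fanSize n) * (b * fanSize n * (r / n)) ^ 3 := by
        gcongr
        exact le_mul_of_one_le_right k.cast_nonneg hN
    _ = (k + 2) * (b * r) ^ 3 * (fanSize n ^ 4 / n ^ 3) := by ring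

lemma tauExp_looseCycle_le_two_thirds {ℓ k : ℕ} (hℓ : 2 ≤ ℓ) (hs : 2 * ℓ ≤ s)
    (hr : r + 2 * ℓ = s + 2) :
    tauExp r s (looseCycle s ℓ (k + 3)) ≤ ((2 / 3 : ℝ) : EReal) := by
  refine tauExp_le_of_one_le_optimalValue (by norm_num) (by omega) fun ε hε => ?_
  obtain ⟨K, hK⟩ := exists_one_sub_pow_fanSize_le (r := r) (by omega) (half_pos hε)
  refine ⟨((k * 3 + (3 + (3 + K)) : ℕ) : ℝ) * 2, by norm_cast; omega, ?_⟩
  filter_upwards [eventually_ne_atTop 0, eventually_fan_error_le (r := r) k ((k + 4) * s)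
    (half_pos hε), eventually_mul_fanSize_add_le (2 * ((k + 4) * s)) (2 * s)] with n hn0 herror hn
  set N := fanSize n
  have hN : 1 ≤ N := fanSize_pos hn0
  refine ⟨k * 3 + (N * 3 + (N * 3 + K * N)), ?_, fun {_ _} => ?_⟩
  · calc ((k * 3 + (N * 3 + (N * 3 + K * N)) : ℕ) : ℝ)
        ≤ ((k * 3 + (3 + (3 + K)) : ℕ) * N : ℕ) := by gcongr; nlinarith
      _ ≤ (k * 3 + (3 + (3 + K)) : ℕ) * 2 * (n : ℝ) ^ (2 / 3 : ℝ) := by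
        rw [Nat.cast_mul, mul_assoc]
        gcongr
        exact fanSize_le hn0
  · have hM : k * (s - ℓ) + 3 * ℓ + 2 * (r * N) ≤ (k + 4) * s * N :=
      calc k * (s - ℓ) + 3 * ℓ + 2 * (r * N) ≤ k * s + 2 * s + 2 * (s * N) :=
            add_le_add (add_le_add (by gcongr; omega) (by omega)) (by gcongr; omega)
        _ ≤ (k * s + 2 * s) * N + 2 * (s * N) := by gcongr; exact Nat.le_mul_of_pos_right _ hN
        _ = (k + 4) * s * N := by ring
    refine (one_le_optimalValue_looseCycle_of_add_two_mul_eq hℓ hs hr hM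
      (show _ ≤ n by linarith) (K * N)).trans ?_
    rw [← add_halves ε, ENNReal.ofReal_add (by positivity) (by positivity)]
    gcongr
    exact hK n hn0

end UpperBound

end SemiRandomHypergraph

open SemiRandomHypergraph in
theorem semiRandom_hypergraph_loose_cycle_general (s ℓ m r : ℕ) (hℓ : 1 ≤ ℓ) (hm : 3 ≤ m)
    (hs : 2 * ℓ ≤ s) (hr : r ≤ s) :
    (r ≤ s - 2 * ℓ → tauExp r s (looseCycle s ℓ m) = (0 : EReal)) ∧
    ((((r : ℝ) - s + 2 * ℓ) / 3 : ℝ) : EReal) ≤ tauExp r s (looseCycle s ℓ m) ∧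
    (2 ≤ ℓ → r = s - 2 * ℓ + 2 →
      tauExp r s (looseCycle s ℓ m) = ((2 / 3 : ℝ) : EReal)) := by
  have hlower := le_tauExp_looseCycle hℓ hm hs hr
  refine ⟨fun hr₁ => ?_, ?_, fun hℓ₂ hr₂ => ?_⟩
  · obtain ⟨k, rfl⟩ := Nat.exists_eq_add_of_le' (show 2 ≤ m by omega)
    refine (tauExp_looseCycle_le_zero hℓ hs (by omega)).antisymm (hlower.trans' ?_)
    exact EReal.coe_nonneg.2 (by positivity)
  · refine hlower.trans' (EReal.coe_le_coe_iff.2 ?_)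
    have : (r : ℝ) + 2 * ℓ ≤ (r + 2 * ℓ - s : ℕ) + s := by exact_mod_cast le_tsub_add
    linarith
  · obtain ⟨k, rfl⟩ := Nat.exists_eq_add_of_le' hm
    refine (tauExp_looseCycle_le_two_thirds hℓ₂ hs (by omega)).antisymm (hlower.trans' ?_)
    rw [show r + 2 * ℓ - s = 2 by omega, Nat.cast_two]

open SemiRandomHypergraph in
/-- **Proposition 11 (loose cycles).** Let `ℓ ≥ 2`, `m ≥ 3`, `s ≥ 2ℓ`, `2 ≤ r ≤ s - ℓ`,
and let `G = C_m^{(s,ℓ)}`. Then (i) if `r ≤ s - 2ℓ` then `τ^{(r)}_{P_G} = 0`;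
(ii) if `r ≥ s - 2ℓ + 1` then `τ^{(r)}_{P_G} ≥ (r-s+2ℓ)/3`;
(iii) if `r = s - 2ℓ + 2` then `τ^{(r)}_{P_G} = 2/3`. -/
theorem semiRandom_hypergraph_loose_cycle
    (s ℓ m r : ℕ) (hℓ : 2 ≤ ℓ) (hm : 3 ≤ m) (hs : 2 * ℓ ≤ s)
    (hr2 : 2 ≤ r) (hr : r ≤ s - ℓ) :
    (r ≤ s - 2 * ℓ → tauExp r s (looseCycle s ℓ m) = (0 : EReal)) ∧
    (s - 2 * ℓ + 1 ≤ r →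
      ((((r : ℝ) - s + 2 * ℓ) / 3 : ℝ) : EReal) ≤ tauExp r s (looseCycle s ℓ m)) ∧
    (r = s - 2 * ℓ + 2 → tauExp r s (looseCycle s ℓ m) = ((2 / 3 : ℝ) : EReal)) := by
  have hmain := semiRandom_hypergraph_loose_cycle_general s ℓ m r (by omega) hm hs (by omega)
  exact ⟨hmain.1, fun _ => hmain.2.1, hmain.2.2 hℓ⟩
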